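/- Let G and Ω be domains in ℂ such that G is either simply connected or has at least two holes, and let Φ = (φₙ) be an eventually injective sequence of holomorphic maps from G to Ω. Then there exists a (Φ,G,Ω)-universal function if and only if for every G-convex compact set K ⊆ G, every compact set L ⊆ Ω, and every N ∈ ℕ, there exists n ≥ N such that φₙ(K) ∩ L = ∅ and φₙ(K) is Ω-convex. -/

import Mathlib

open Set Metric Bornology Filter

/-- A *hole* of `E` is a nonempty bounded connected component of `ℂ \ E`. -/
def IsHole (E C : Set ℂ) : Prop :=
  (∃ z ∈ Eᶜ, C = connectedComponentIn Eᶜ z) ∧ Bornology.IsBounded C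

/-- A compact set `K` contained in an open set `Ω` is `Ω`-*convex* if every hole of `K`
contains a point of `ℂ \ Ω`. -/
def OmegaConvex (Ω K : Set ℂ) : Prop :=
  ∀ C : Set ℂ, IsHole K C → (C ∩ Ωᶜ).Nonempty

/-- The *polynomial hull* of `K`: the union of `K` and all of its holes. -/
def polyHull (K : Set ℂ) : Set ℂ :=
  K ∪ {z | z ∈ Kᶜ ∧ Bornology.IsBounded (connectedComponentIn Kᶜ z)}

/-- A sequence of maps is *eventually injective* on `G`: for every compact `K ⊆ G`, the maps
are eventually injective on a neighbourhood of `K` in `G`. -/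
def EventuallyInjective (G : Set ℂ) (φ : ℕ → ℂ → ℂ) : Prop :=
  ∀ K : Set ℂ, K ⊆ G → IsCompact K →
    ∃ N : ℕ, ∀ n ≥ N, ∃ U : Set ℂ, IsOpen U ∧ K ⊆ U ∧ U ⊆ G ∧ Set.InjOn (φ n) U

/-- `f` is `(Φ, G, Ω)`-*universal*: the family `{f ∘ φ n : n ∈ ℕ}` is dense in `H(G)` for the
topology of locally uniform convergence, i.e. every `g` holomorphic on `G` can be approximated
uniformly on every compact subset of `G` by functions `f ∘ φ n`. -/
def UniversalFor (G : Set ℂ) (φ : ℕ → ℂ → ℂ) (f : ℂ → ℂ) : Prop :=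
  ∀ g : ℂ → ℂ, DifferentiableOn ℂ g G →
    ∀ K : Set ℂ, K ⊆ G → IsCompact K → ∀ ε : ℝ, 0 < ε →
      ∃ n : ℕ, ∀ z ∈ K, ‖f (φ n z) - g z‖ < ε

/-- `E` has no hole (for a domain: simple connectivity). -/
def HasNoHole (E : Set ℂ) : Prop := ¬ ∃ C : Set ℂ, IsHole E C

/-- A *Jordan curve*: the image of the unit circle under an injective continuous map. -/
def IsJordanCurve (C : Set ℂ) : Prop :=
  ∃ γ : ℂ → ℂ, ContinuousOn γ (Metric.sphere 0 1) ∧ Set.InjOn γ (Metric.sphere 0 1) ∧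
    C = γ '' Metric.sphere 0 1

/-- A *Jordan arc*: the image of `[0,1]` under an injective continuous map. -/
def IsJordanArc (C : Set ℂ) : Prop :=
  ∃ γ : ℝ → ℂ, ContinuousOn γ (Set.Icc 0 1) ∧ Set.InjOn γ (Set.Icc 0 1) ∧
    C = γ '' Set.Icc 0 1

/-- A compact set is *regular* if its boundary is a union of Jordan curves. -/
def RegularCompact (K : Set ℂ) : Prop :=
  ∃ 𝒞 : Set (Set ℂ), (∀ C ∈ 𝒞, IsJordanCurve C) ∧ frontier K = ⋃₀ 𝒞

/-- `K` is `Ω`-*connected*: it has no hole if `Ω` is simply connected, and has at least one hole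
if `Ω` is not simply connected. -/
def OmegaConnectedSet (Ω K : Set ℂ) : Prop :=
  (HasNoHole Ω → HasNoHole K) ∧ (¬ HasNoHole Ω → ∃ C : Set ℂ, IsHole K C)

/-- Membership in the family `M(Ω)` of nonempty compact subsets of `Ω` that are regular,
connected, `Ω`-connected and `Ω`-convex. -/
def MemM (Ω K : Set ℂ) : Prop :=
  K.Nonempty ∧ IsCompact K ∧ K ⊆ Ω ∧ RegularCompact K ∧ IsConnected K ∧
    OmegaConnectedSet Ω K ∧ OmegaConvex Ω K

/-- `f` is `(Φ, M)`-*universal*: for every `K ∈ M`, the restrictions of the `f ∘ φ n` to `K`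
are dense in `C(K)`. -/
def MUniversal (M : Set (Set ℂ)) (φ : ℕ → ℂ → ℂ) (f : ℂ → ℂ) : Prop :=
  ∀ K ∈ M, ∀ h : ℂ → ℂ, ContinuousOn h K → ∀ ε : ℝ, 0 < ε →
    ∃ n : ℕ, ∀ z ∈ K, ‖f (φ n z) - h z‖ < ε

section
open Set Metric Bornology Filter

lemma exp_one_const {S : Set ℂ} (hS : IsPreconnected S) {f : ℂ → ℂ} (hf : ContinuousOn f S)
    (h1 : ∀ z ∈ S, Complex.exp (f z) = 1) {a b : ℂ} (ha : a ∈ S) (hb : b ∈ S) : f a = f b := by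
  have : DiscreteTopology ((AddSubgroup.zmultiples (2 * Real.pi * Complex.I) : AddSubgroup ℂ) : Set ℂ) :=
    NormedSpace.discreteTopology_zmultiples (2 * Real.pi * Complex.I)
  refine hS.constant_of_mapsTo (T := ((AddSubgroup.zmultiples (2 * Real.pi * Complex.I) : AddSubgroup ℂ) : Set ℂ)) ⟨this⟩ hf ?_ ha hb
  intro z hz
  obtain ⟨n, hn⟩ := Complex.exp_eq_one_iff.1 (h1 z hz)
  refine AddSubgroup.mem_zmultiples_iff.2 ⟨n, ?_⟩
  rw [hn]; simp

lemma isOpen_compl_diff_comp {W : Set ℂ} (hW : IsOpen W) (a : ℂ) :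
    IsOpen (W \ connectedComponentIn W a) := by
  rw [isOpen_iff_mem_nhds]
  intro z hz
  have h1 : connectedComponentIn W z ∈ nhds z :=
    hW.connectedComponentIn.mem_nhds (mem_connectedComponentIn hz.1)
  filter_upwards [h1] with y hy
  refine ⟨connectedComponentIn_subset _ _ hy, fun hya => hz.2 ?_⟩
  have e1 := connectedComponentIn_eq hy
  have e2 := connectedComponentIn_eq hya
  rw [e2, ← e1]; exact mem_connectedComponentIn hz.1

lemma exists_log {u : ℂ → ℂ} (hu : Continuous u) (h0 : ∀ z, u z ≠ 0) :
    ∃ θ : ℂ → ℂ, Continuous θ ∧ ∀ z, Complex.exp (θ z) = u z := by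
  obtain ⟨F, ⟨-, hF⟩, -⟩ := Complex.isCoveringMapOn_exp.existsUnique_continuousMap_lifts
    (⟨u, hu⟩ : C(ℂ, ℂ)) (a₀ := 0) (e₀ := Complex.log (u 0)) (Complex.exp_log (h0 0)) (fun a => h0 a)
  exact ⟨F, F.continuous, fun z => congrFun hF z⟩

lemma janiszewski {A B : Set ℂ} (hA : IsClosed A) (hB : IsClosed B) (hAB : Disjoint A B)
    {a b : ℂ} (h1 : b ∈ connectedComponentIn Aᶜ a) (h2 : b ∈ connectedComponentIn Bᶜ a) :
    b ∈ connectedComponentIn (A ∪ B)ᶜ a := by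
  classical
  have haA : a ∈ Aᶜ := connectedComponentIn_nonempty_iff.1 ⟨b, h1⟩
  have haB : a ∈ Bᶜ := connectedComponentIn_nonempty_iff.1 ⟨b, h2⟩
  have hbA : b ∈ Aᶜ := connectedComponentIn_subset _ _ h1
  have hbB : b ∈ Bᶜ := connectedComponentIn_subset _ _ h2
  by_contra hb
  set W := (A ∪ B)ᶜ with hW
  have hWo : IsOpen W := (hA.union hB).isOpen_compl
  set P := connectedComponentIn W a with hP
  have hPo : IsOpen P := hWo.connectedComponentIn
  have hPW : P ⊆ W := connectedComponentIn_subset _ _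
  have hQo : IsOpen (W \ P) := isOpen_compl_diff_comp hWo a
  have haW : a ∈ W := by simp [hW]; exact ⟨haA, haB⟩
  have haP : a ∈ P := mem_connectedComponentIn haW
  obtain ⟨ρ, hρB, hρA, -⟩ := exists_continuous_zero_one_of_isClosed hB hA hAB.symm
  set s : ℂ → ℂ := fun z => if z ∈ P then (ρ z : ℂ) else 0 with hs
  set t : ℂ → ℂ := fun z => if z ∈ P then (ρ z : ℂ) - 1 else 0 with ht
  have hρc : Continuous (fun z => (ρ z : ℂ)) := by fun_prop
  have key : ∀ (r : ℂ → ℂ) (hr : Continuous r) (z : ℂ), (z ∈ W ∨ r z = 0) →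
      ContinuousAt (fun z => if z ∈ P then r z else 0) z := by
    intro r hr z hz
    by_cases hzP : z ∈ P
    · refine hr.continuousAt.congr ?_
      filter_upwards [hPo.mem_nhds hzP] with y hy
      simp [hy]
    by_cases hzW : z ∈ W
    · refine (continuousAt_const (y := (0:ℂ))).congr ?_
      filter_upwards [hQo.mem_nhds ⟨hzW, hzP⟩] with y hy
      simp [hy.2]
    · have h0 : r z = 0 := hz.resolve_left hzW
      unfold ContinuousAt
      simp only [hzP, if_false]
      have hr0 : Tendsto r (nhds z) (nhds 0) := by rw [← h0]; exact hr.continuousAt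
      refine squeeze_zero_norm (fun y => ?_) (tendsto_zero_iff_norm_tendsto_zero.1 hr0)
      split_ifs <;> simp
  have hsc : ∀ z ∈ Aᶜ, ContinuousAt s z := by
    intro z hz
    refine key _ hρc z ?_
    by_cases hzB : z ∈ B
    · right; simp [hρB hzB]
    · left; simp [hW]; exact ⟨hz, hzB⟩
  have htc : ∀ z ∈ Bᶜ, ContinuousAt t z := by
    intro z hz
    refine key (fun z => (ρ z : ℂ) - 1) (hρc.sub continuous_const) z ?_
    by_cases hzA : z ∈ A
    · right; simp [hρA hzA]
    · left; simp [hW]; exact ⟨hzA, hz⟩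
  set c : ℂ := 2 * Real.pi * Complex.I with hc
  have hst : ∀ z, Complex.exp (c * s z) = Complex.exp (c * t z) := by
    intro z
    by_cases hz : z ∈ P
    · simp only [hs, ht, hz, if_true]
      rw [mul_sub, mul_one, Complex.exp_sub, hc, Complex.exp_two_pi_mul_I, div_one]
    · simp [hs, ht, hz]
  have huc : Continuous (fun z => Complex.exp (c * s z)) := by
    rw [continuous_iff_continuousAt]
    intro z
    by_cases hz : z ∈ A
    · have hzB : z ∈ Bᶜ := fun h => hAB.le_bot ⟨hz, h⟩
      simp_rw [hst]
      exact (Complex.continuous_exp.continuousAt).comp (continuousAt_const.mul (htc z hzB))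
    · exact (Complex.continuous_exp.continuousAt).comp (continuousAt_const.mul (hsc z hz))
  obtain ⟨θ, hθ, hθe⟩ := exists_log huc (fun z => Complex.exp_ne_zero _)
  have e1 := exp_one_const (f := fun z => c * s z - θ z) (isPreconnected_connectedComponentIn (x := a) (F := Aᶜ))
    (fun z hz => ((continuousAt_const.mul (hsc z (connectedComponentIn_subset _ _ hz))).sub
      hθ.continuousAt).continuousWithinAt)
    (fun z _ => by rw [Complex.exp_sub, hθe, div_self (Complex.exp_ne_zero _)])
    (mem_connectedComponentIn haA) h1
  have e2 := exp_one_const (f := fun z => c * t z - θ z) (isPreconnected_connectedComponentIn (x := a) (F := Bᶜ))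
    (fun z hz => ((continuousAt_const.mul (htc z (connectedComponentIn_subset _ _ hz))).sub
      hθ.continuousAt).continuousWithinAt)
    (fun z _ => by rw [Complex.exp_sub, hθe, hst, div_self (Complex.exp_ne_zero _)])
    (mem_connectedComponentIn haB) h2
  have hc0 : c ≠ 0 := by simp [hc, Real.pi_ne_zero]
  simp only [hs, ht, haP, hb, if_true, if_false] at e1 e2
  apply hc0
  linear_combination e1 - e2

end

section
set_option linter.unusedVariables false
open Set Metric Bornology Filter

lemma closure_comp_subset {E : Set ℂ} (hE : IsClosed E) (z : ℂ) :
    closure (connectedComponentIn Eᶜ z) ⊆ connectedComponentIn Eᶜ z ∪ E := by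
  intro x hx
  by_cases hxE : x ∈ E
  · exact Or.inr hxE
  left
  have h1 : connectedComponentIn Eᶜ x ∈ nhds x :=
    hE.isOpen_compl.connectedComponentIn.mem_nhds (mem_connectedComponentIn hxE)
  obtain ⟨y, hy1, hy2⟩ := mem_closure_iff_nhds.1 hx _ h1
  rw [connectedComponentIn_eq hy2, ← connectedComponentIn_eq hy1]
  exact mem_connectedComponentIn hxE

lemma closure_comp_meets {E : Set ℂ} (hE : IsClosed E) (hne : E.Nonempty) {z : ℂ} (hz : z ∈ Eᶜ) :
    (closure (connectedComponentIn Eᶜ z) ∩ E).Nonempty := by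
  by_contra h
  rw [not_nonempty_iff_eq_empty] at h
  have hcl : IsClosed (connectedComponentIn Eᶜ z) := by
    refine isClosed_of_closure_subset fun x hx => ?_
    rcases closure_comp_subset hE z hx with h1 | h1
    · exact h1
    · exact absurd (⟨x, hx, h1⟩ : (closure (connectedComponentIn Eᶜ z) ∩ E).Nonempty) (by rw [h]; simp)
  have hop : IsOpen (connectedComponentIn Eᶜ z) := hE.isOpen_compl.connectedComponentIn
  have := IsClopen.eq_univ ⟨hcl, hop⟩ ⟨z, mem_connectedComponentIn hz⟩
  obtain ⟨e, he⟩ := hne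
  exact connectedComponentIn_subset Eᶜ z (this ▸ mem_univ e) he

lemma comp_union_preconnected {E : Set ℂ} (hE : IsClosed E) (hc : IsConnected E) {z : ℂ} (hz : z ∈ Eᶜ) :
    IsPreconnected (connectedComponentIn Eᶜ z ∪ E) := by
  have h1 : IsPreconnected (closure (connectedComponentIn Eᶜ z) ∪ E) :=
    (isPreconnected_connectedComponentIn.closure).union' (closure_comp_meets hE hc.nonempty hz)
      hc.isPreconnected
  convert h1 using 1
  apply subset_antisymm
  · exact union_subset_union_left _ subset_closure
  · exact union_subset (closure_comp_subset hE z) subset_union_right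

lemma comp_union_eq {A B : Set ℂ} (hA : IsClosed A) (hB : IsClosed B) (hAB : Disjoint A B) (z : ℂ) :
    connectedComponentIn (A ∪ B)ᶜ z = connectedComponentIn Aᶜ z ∩ connectedComponentIn Bᶜ z := by
  apply subset_antisymm
  · exact subset_inter (connectedComponentIn_mono _ (by simp)) (connectedComponentIn_mono _ (by simp))
  · exact fun b hb => janiszewski hA hB hAB hb.1 hb.2

lemma convex_aux {Ω A B : Set ℂ} (hA : IsClosed A) (hB : IsClosed B) (hAc : IsConnected A)
    (hBc : IsConnected B) (hAB : Disjoint A B) (hAΩ : OmegaConvex Ω A) {y z : ℂ} (hy : y ∈ B)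
    (hzA : z ∈ Aᶜ) (hzB : z ∈ Bᶜ) (hyz : y ∉ connectedComponentIn Aᶜ z)
    (hb : IsBounded (connectedComponentIn Aᶜ z ∩ connectedComponentIn Bᶜ z)) :
    ((connectedComponentIn Aᶜ z ∩ connectedComponentIn Bᶜ z) ∩ Ωᶜ).Nonempty := by
  have h1 : connectedComponentIn Aᶜ z ∪ A ⊆ Bᶜ := by
    rintro x (hx | hx) hxB
    · apply hyz
      rw [connectedComponentIn_eq hx]
      exact hBc.isPreconnected.subset_connectedComponentIn hxB
        (fun w hw hwA => hAB.le_bot ⟨hwA, hw⟩) hy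
    · exact hAB.le_bot ⟨hx, hxB⟩
  have h2 : connectedComponentIn Aᶜ z ⊆ connectedComponentIn Bᶜ z :=
    subset_union_left.trans <| (comp_union_preconnected hA hAc hzA).subset_connectedComponentIn
      (Or.inl (mem_connectedComponentIn hzA)) h1
  rw [inter_eq_left.2 h2] at hb ⊢
  exact hAΩ _ ⟨⟨z, hzA, rfl⟩, hb⟩

lemma union_convex {Ω A B : Set ℂ} (hA : IsClosed A) (hB : IsClosed B) (hAc : IsConnected A)
    (hBc : IsConnected B) (hAB : Disjoint A B) (hAΩ : OmegaConvex Ω A) (hBΩ : OmegaConvex Ω B)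
    {x y : ℂ} (hx : x ∈ A) (hy : y ∈ B)
    (h : IsBounded (connectedComponentIn Aᶜ y ∩ connectedComponentIn Bᶜ x) →
      ((connectedComponentIn Aᶜ y ∩ connectedComponentIn Bᶜ x) ∩ Ωᶜ).Nonempty) :
    OmegaConvex Ω (A ∪ B) := by
  rintro C ⟨⟨z, hz, rfl⟩, hb⟩
  rw [comp_union_eq hA hB hAB] at hb ⊢
  have hzA : z ∈ Aᶜ := fun h => hz (Or.inl h)
  have hzB : z ∈ Bᶜ := fun h => hz (Or.inr h)
  by_cases h1 : y ∈ connectedComponentIn Aᶜ z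
  · by_cases h2 : x ∈ connectedComponentIn Bᶜ z
    · rw [connectedComponentIn_eq h1, connectedComponentIn_eq h2] at hb ⊢
      exact h hb
    · rw [inter_comm (connectedComponentIn Aᶜ z)] at hb ⊢
      exact convex_aux hB hA hBc hAc hAB.symm hBΩ hx hzB hzA h2 hb
  · exact convex_aux hA hB hAc hBc hAB hAΩ hy hzA hzB h1 hb

lemma transport_aux {U K : Set ℂ} (hU : IsOpen U) (hUc : IsPreconnected U) (hK : IsClosed K)
    (hKU : K ⊆ U) {φ : ℂ → ℂ} (hφ : ContinuousOn φ U) (hi : InjOn φ U) {z w : ℂ}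
    (hz : z ∈ U) (hw : w ∈ U) (h : w ∈ connectedComponentIn Kᶜ z) :
    φ w ∈ connectedComponentIn (φ '' K)ᶜ (φ z) := by
  have hzK : z ∈ Kᶜ := connectedComponentIn_nonempty_iff.1 ⟨w, h⟩
  have h1 : w ∈ connectedComponentIn (Uᶜ ∪ K)ᶜ z := by
    refine janiszewski hU.isClosed_compl hK
      (disjoint_left.2 fun x hx hxK => hx (hKU hxK)) ?_ h
    rw [compl_compl]
    exact hUc.subset_connectedComponentIn hz subset_rfl hw
  have hsub : connectedComponentIn (Uᶜ ∪ K)ᶜ z ⊆ U \ K := by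
    refine (connectedComponentIn_subset _ _).trans ?_
    intro x hx
    simp at hx
    exact hx
  have h2 : IsPreconnected (φ '' connectedComponentIn (Uᶜ ∪ K)ᶜ z) :=
    isPreconnected_connectedComponentIn.image _ (hφ.mono (hsub.trans sdiff_subset))
  refine h2.subset_connectedComponentIn ⟨z, mem_connectedComponentIn ?_, rfl⟩ ?_ ⟨w, h1, rfl⟩
  · simp; exact ⟨hz, hzK⟩
  · rintro _ ⟨x, hx, rfl⟩ ⟨k, hk, hkx⟩
    have := hi (hKU hk) (hsub hx).1 hkx
    exact (hsub hx).2 (this ▸ hk)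

lemma transport {U K : Set ℂ} (hU : IsOpen U) (hUc : IsPreconnected U) (hK : IsCompact K)
    (hKU : K ⊆ U) {φ : ℂ → ℂ} (hφ : ContinuousOn φ U) (hi : InjOn φ U)
    (ho : ∀ V ⊆ U, IsOpen V → IsOpen (φ '' V)) {z w : ℂ}
    (hz : z ∈ U) (hw : w ∈ U) :
    w ∈ connectedComponentIn Kᶜ z ↔ φ w ∈ connectedComponentIn (φ '' K)ᶜ (φ z) := by
  refine ⟨transport_aux hU hUc hK.isClosed hKU hφ hi hz hw, fun h => ?_⟩
  set ψ := Function.invFunOn φ U with hψ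
  have hl : ∀ x ∈ U, ψ (φ x) = x := fun x hx => hi.leftInvOn_invFunOn hx
  have hψc : ContinuousOn ψ (φ '' U) := by
    rintro _ ⟨x, hx, rfl⟩
    refine ContinuousAt.continuousWithinAt ?_
    intro N hN
    rw [hl x hx] at hN
    have : φ '' (U ∩ interior N) ∈ nhds (φ x) :=
      (ho _ inter_subset_left (hU.inter isOpen_interior)).mem_nhds
        ⟨x, ⟨hx, mem_interior_iff_mem_nhds.2 hN⟩, rfl⟩
    rw [mem_map]
    filter_upwards [this]
    rintro _ ⟨y, hy, rfl⟩
    show ψ (φ y) ∈ N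
    rw [hl y hy.1]
    exact interior_subset hy.2
  have hψi : InjOn ψ (φ '' U) := by
    rintro _ ⟨x, hx, rfl⟩ _ ⟨y, hy, rfl⟩ hxy
    rw [hl x hx, hl y hy] at hxy
    rw [hxy]
  have := transport_aux (ho U subset_rfl hU) (hUc.image _ hφ) (hK.image_of_continuousOn
    (hφ.mono hKU)).isClosed (image_mono hKU) hψc hψi ⟨z, hz, rfl⟩ ⟨w, hw, rfl⟩ h
  have e : ψ '' (φ '' K) = K := by
    rw [image_image]
    ext x
    constructor
    · rintro ⟨y, hy, rfl⟩
      simp only [hl y (hKU hy)]; exact hy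
    · exact fun hx => ⟨x, hx, hl x (hKU hx)⟩
  rwa [e, hl z hz, hl w hw] at this

end

section
open Set Metric Bornology Filter

lemma preconn_out {R : ℝ} (hR : 0 < R) : IsPreconnected {z : ℂ | R < ‖z‖} := by
  have h1 : IsPreconnected {w : ℂ | Real.log R < w.re} :=
    (convex_halfSpace_re_gt (Real.log R)).isPreconnected
  convert h1.image _ Complex.continuous_exp.continuousOn using 1
  ext z
  simp only [mem_image, mem_setOf_eq]
  constructor
  · intro hz
    have hz0 : z ≠ 0 := by rintro rfl; simp at hz; linarith
    refine ⟨Complex.log z, ?_, Complex.exp_log hz0⟩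
    rw [Complex.log_re]; exact Real.log_lt_log hR hz
  · rintro ⟨w, hw, rfl⟩
    rw [Complex.norm_exp]
    exact (Real.log_lt_iff_lt_exp hR).1 hw

lemma not_bounded_out (R : ℝ) : ¬ IsBounded {z : ℂ | R < ‖z‖} := by
  intro h
  obtain ⟨M, hM⟩ := h.exists_norm_le
  have := hM ((max R M + 1 : ℝ) : ℂ) (by
    simp only [mem_setOf_eq, Complex.norm_real, Real.norm_eq_abs]
    exact lt_of_lt_of_le (by linarith [le_max_left R M]) (le_abs_self _))
  simp only [Complex.norm_real, Real.norm_eq_abs] at this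
  linarith [le_abs_self (max R M + 1), le_max_right R M]

lemma exists_R {K : Set ℂ} (hK : IsCompact K) :
    ∃ R : ℝ, 0 < R ∧ K ⊆ closedBall 0 R ∧ (∀ z, R < ‖z‖ → {z : ℂ | R < ‖z‖} ⊆ connectedComponentIn Kᶜ z) := by
  obtain ⟨R, hR0, hR⟩ := hK.isBounded.exists_pos_norm_le
  refine ⟨R, hR0, fun x hx => by simpa using hR x hx, fun z hz => ?_⟩
  refine (preconn_out hR0).subset_connectedComponentIn hz fun x hx hxK => ?_
  exact absurd (hR x hxK) (not_le.2 hx)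

/-- all components unbounded implies the complement is one component -/
lemma comp_eq_of_unbounded {K : Set ℂ} (hK : IsCompact K) {p q : ℂ}
    (hp : ¬ IsBounded (connectedComponentIn Kᶜ p)) (hq : ¬ IsBounded (connectedComponentIn Kᶜ q)) :
    q ∈ connectedComponentIn Kᶜ p := by
  obtain ⟨R, hR0, hR, hout⟩ := exists_R hK
  have key : ∀ p, ¬ IsBounded (connectedComponentIn Kᶜ p) → ∃ x ∈ connectedComponentIn Kᶜ p, R < ‖x‖ := by
    intro p hp
    by_contra! h
    exact hp (isBounded_iff_forall_norm_le.2 ⟨R, h⟩)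
  obtain ⟨x, hx, hxR⟩ := key p hp
  obtain ⟨y, hy, hyR⟩ := key q hq
  have e1 := connectedComponentIn_eq hx
  have e2 := connectedComponentIn_eq hy
  have e3 := connectedComponentIn_eq (hout x hxR hyR)
  rw [e1, e3, ← e2]
  apply mem_connectedComponentIn
  apply connectedComponentIn_nonempty_iff.1 ⟨y, hy⟩

lemma conn_enlarge {G K : Set ℂ} (hG : IsOpen G) (hGc : IsConnected G) (hK : IsCompact K)
    (hKG : K ⊆ G) : ∃ K', IsCompact K' ∧ IsConnected K' ∧ K' ⊆ G ∧ K ⊆ K' := by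
  obtain ⟨x0, hx0⟩ := hGc.nonempty
  have hp : IsPathConnected G := hG.isConnected_iff_isPathConnected.1 hGc
  suffices h : ∃ K', IsCompact K' ∧ IsPreconnected K' ∧ K' ⊆ G ∧ K ⊆ K' ∧ x0 ∈ K' by
    obtain ⟨K', h1, h2, h3, h4, h5⟩ := h
    exact ⟨K', h1, ⟨⟨x0, h5⟩, h2⟩, h3, h4⟩
  refine hK.induction_on (p := fun s => ∃ K', IsCompact K' ∧ IsPreconnected K' ∧ K' ⊆ G ∧ s ⊆ K' ∧ x0 ∈ K') ?_ ?_ ?_ ?_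
  · exact ⟨{x0}, isCompact_singleton, isPreconnected_singleton, by simpa using hx0, empty_subset _, rfl⟩
  · rintro s t hst ⟨K', h1, h2, h3, h4, h5⟩
    exact ⟨K', h1, h2, h3, hst.trans h4, h5⟩
  · rintro s t ⟨K', h1, h2, h3, h4, h5⟩ ⟨K'', k1, k2, k3, k4, k5⟩
    exact ⟨K' ∪ K'', h1.union k1, h2.union x0 h5 k5 k2, union_subset h3 k3,
      union_subset_union h4 k4, Or.inl h5⟩
  · intro x hx
    obtain ⟨r, hr, hrG⟩ := Metric.nhds_basis_closedBall.mem_iff.1 (hG.mem_nhds (hKG hx))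
    obtain ⟨γ, hγ⟩ := hp.joinedIn x0 hx0 x (hKG hx)
    refine ⟨closedBall x r, mem_nhdsWithin_of_mem_nhds (closedBall_mem_nhds x hr),
      range γ ∪ closedBall x r, (isCompact_range γ.continuous).union (isCompact_closedBall x r), ?_,
      union_subset (range_subset_iff.2 hγ) hrG, subset_union_right, Or.inl ⟨0, γ.source⟩⟩
    exact (isPreconnected_range γ.continuous).union x ⟨1, γ.target⟩ (mem_closedBall_self hr.le)
      (convex_closedBall x r).isPreconnected

lemma nice_enlarge {G K₀ : Set ℂ} (hG : IsOpen G) (hGc : IsConnected G) (hK₀ : IsCompact K₀)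
    (hK₀G : K₀ ⊆ G) : ∃ K', IsCompact K' ∧ IsConnected K' ∧ K' ⊆ G ∧ K₀ ⊆ K' ∧ OmegaConvex G K' := by
  obtain ⟨K, hK, hKc, hKG, hKK⟩ := conn_enlarge hG hGc hK₀ hK₀G
  set H : Set ℂ := {z | z ∈ K ∨ (IsBounded (connectedComponentIn Kᶜ z) ∧ connectedComponentIn Kᶜ z ⊆ G)} with hH
  have hKH : K ⊆ H := fun x hx => Or.inl hx
  have hstab : ∀ z ∉ H, connectedComponentIn Kᶜ z ⊆ Hᶜ := by
    intro z hz x hx hxH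
    have hxK : x ∉ K := connectedComponentIn_subset _ _ hx
    rw [hH] at hz hxH
    have := hxH.resolve_left hxK
    rw [← connectedComponentIn_eq hx] at this
    exact hz (Or.inr this)
  have hstab' : ∀ z ∈ H, connectedComponentIn Kᶜ z ⊆ H := by
    intro z hz x hx
    have hxK : x ∉ K := connectedComponentIn_subset _ _ hx
    have hzK : z ∉ K := connectedComponentIn_nonempty_iff.1 ⟨x, hx⟩
    rw [hH] at hz ⊢
    have := hz.resolve_left hzK
    rw [connectedComponentIn_eq hx] at this
    exact Or.inr this
  have hHcl : IsClosed H := by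
    rw [← isOpen_compl_iff, isOpen_iff_mem_nhds]
    intro z hz
    have hzK : z ∈ Kᶜ := fun h => hz (hKH h)
    exact mem_of_superset (hK.isClosed.isOpen_compl.connectedComponentIn.mem_nhds
      (mem_connectedComponentIn hzK)) (hstab z hz)
  obtain ⟨R, hR0, hR, hout⟩ := exists_R hK
  have hHb : H ⊆ closedBall 0 R := by
    rintro z (hz | hz)
    · exact hR hz
    · by_contra hzR
      have hzR' : R < ‖z‖ := by simpa using hzR
      exact not_bounded_out R (hz.1.subset (hout z hzR'))
  refine ⟨H, (isCompact_closedBall 0 R).of_isClosed_subset hHcl hHb, ⟨hKc.nonempty.mono hKH, ?_⟩, ?_,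
    hKK.trans hKH, ?_⟩
  · obtain ⟨x0, hx0⟩ := hKc.nonempty
    refine isPreconnected_of_forall x0 fun y hy => ?_
    by_cases hyK : y ∈ K
    · exact ⟨K, hKH, hx0, hyK, hKc.isPreconnected⟩
    · exact ⟨connectedComponentIn Kᶜ y ∪ K, union_subset (hstab' y hy) hKH, Or.inr hx0,
        Or.inl (mem_connectedComponentIn hyK), comp_union_preconnected hK.isClosed hKc hyK⟩
  · rintro z (hz | hz)
    · exact hKG hz
    · by_cases hzK : z ∈ K
      · exact hKG hzK
      · exact hz.2 (mem_connectedComponentIn hzK)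
  · rintro C ⟨⟨z, hz, rfl⟩, hb⟩
    have hzK : z ∈ Kᶜ := fun h => hz (hKH h)
    have e : connectedComponentIn Kᶜ z ⊆ connectedComponentIn Hᶜ z :=
      isPreconnected_connectedComponentIn.subset_connectedComponentIn (mem_connectedComponentIn hzK)
        (hstab z hz)
    by_contra hne
    apply hz
    refine Or.inr ⟨hb.subset e, fun x hx => ?_⟩
    by_contra hxG
    exact hne ⟨x, e hx, hxG⟩

lemma noHole_unbounded {G K : Set ℂ} (hKG : K ⊆ G) (hG : HasNoHole G) (hK : OmegaConvex G K)
    {z : ℂ} (hz : z ∈ Kᶜ) : ¬ IsBounded (connectedComponentIn Kᶜ z) := by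
  intro hb
  obtain ⟨p, hp, hpG⟩ := hK _ ⟨⟨z, hz, rfl⟩, hb⟩
  apply hG
  refine ⟨connectedComponentIn Gᶜ p, ⟨p, hpG, rfl⟩, hb.subset ?_⟩
  rw [connectedComponentIn_eq hp]
  exact connectedComponentIn_mono _ (compl_subset_compl.2 hKG)

lemma sep_lemma {F : Set ℂ} (hF : IsClosed F) {a b : ℂ} (ha : a ∈ F)
    (hC : IsBounded (connectedComponentIn F a)) (hb : b ∉ connectedComponentIn F a) (hbF : b ∈ F) :
    ∃ K : Set ℂ, IsCompact K ∧ K ⊆ Fᶜ ∧ IsBounded (connectedComponentIn Kᶜ a) ∧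
      b ∉ connectedComponentIn Kᶜ a := by
  obtain ⟨R, hR0, hR⟩ := hC.exists_pos_norm_lt
  set E := F ∩ closedBall 0 R with hE
  have hEc : IsCompact E := (isCompact_closedBall 0 R).inter_left hF
  have haE : a ∈ E := ⟨ha, by simpa using (hR a (mem_connectedComponentIn ha)).le⟩
  haveI : CompactSpace E := isCompact_iff_compactSpace.1 hEc
  have hsub : ∀ x ∈ connectedComponent (⟨a, haE⟩ : E), (x : ℂ) ∈ connectedComponentIn F a := by
    intro x hx
    refine connectedComponentIn_mono a inter_subset_left (?_ : (x : ℂ) ∈ connectedComponentIn E a)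
    rw [connectedComponentIn_eq_image haE]
    exact ⟨x, hx, rfl⟩
  set Z : Set E := {x | R ≤ ‖(x : ℂ)‖ ∨ (x : ℂ) = b} with hZ
  have hZc : IsClosed Z := by
    have h1 : IsClosed {x : E | R ≤ ‖(x : ℂ)‖} :=
      isClosed_le continuous_const (continuous_norm.comp continuous_subtype_val)
    have h2 : IsClosed {x : E | (x : ℂ) = b} := isClosed_eq continuous_subtype_val continuous_const
    exact h1.union h2
  obtain ⟨S, hS, haS, hSZ⟩ : ∃ S : Set E, IsClopen S ∧ (⟨a, haE⟩ : E) ∈ S ∧ Z ∩ S = ∅ := by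
    have h0 : Z ∩ ⋂ s : { s : Set E // IsClopen s ∧ (⟨a, haE⟩ : E) ∈ s }, (s : Set E) = ∅ := by
      rw [← connectedComponent_eq_iInter_isClopen]
      ext x
      simp only [mem_inter_iff, mem_empty_iff_false, iff_false, not_and]
      intro hx hx'
      rcases hx with hx | hx
      · exact absurd (hR _ (hsub x hx')) (not_lt.2 hx)
      · exact hb (hx ▸ hsub x hx')
    obtain ⟨t, ht⟩ := hZc.isCompact.elim_finite_subfamily_closed _ (fun s => s.2.1.1) h0
    refine ⟨⋂ i ∈ t, (i : Set E), ?_, ?_, ht⟩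
    · exact t.finite_toSet.isClopen_biInter (fun i _ => i.2.1)
    · simp only [mem_iInter]; exact fun i _ => i.2.2
  set S' : Set ℂ := Subtype.val '' S with hS'
  have hS'c : IsCompact S' := hS.1.isCompact.image continuous_subtype_val
  have hTcl : IsClosed (F \ S') := by
    have : F \ S' = Subtype.val '' Sᶜ ∪ (F ∩ {z | R ≤ ‖z‖}) := by
      ext z
      constructor
      · rintro ⟨hzF, hzS⟩
        by_cases hz : R ≤ ‖z‖
        · exact Or.inr ⟨hzF, hz⟩
        · left
          refine ⟨⟨z, hzF, by simpa using (not_le.1 hz).le⟩, fun h => hzS ⟨_, h, rfl⟩, rfl⟩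
      · rintro (⟨x, hx, rfl⟩ | ⟨hzF, hz⟩)
        · refine ⟨x.2.1, ?_⟩
          rintro ⟨y, hy, hyx⟩
          exact hx (Subtype.ext hyx ▸ hy)
        · refine ⟨hzF, ?_⟩
          rintro ⟨y, hy, rfl⟩
          have : y ∈ Z ∩ S := ⟨Or.inl hz, hy⟩
          rw [hSZ] at this; exact this
    rw [this]
    refine IsClosed.union ?_ (hF.inter (isClosed_le continuous_const continuous_norm))
    exact ((hS.2.isClosed_compl).isCompact.image continuous_subtype_val).isClosed
  have hbS : b ∉ S' := by
    rintro ⟨y, hy, hyb⟩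
    have : y ∈ Z ∩ S := ⟨Or.inr hyb, hy⟩
    rw [hSZ] at this; exact this
  obtain ⟨V, hV, hSV, hVT, hVc⟩ := exists_open_between_and_isCompact_closure hS'c hTcl.isOpen_compl
    (fun x hx h => h.2 hx)
  have haV : a ∈ V := hSV ⟨_, haS, rfl⟩
  have hK : IsCompact (frontier V) := hVc.of_isClosed_subset isClosed_frontier frontier_subset_closure
  have hKF : frontier V ⊆ Fᶜ := by
    intro x hx hxF
    by_cases hxS : x ∈ S'
    · rw [hV.frontier_eq] at hx
      exact hx.2 (hSV hxS)
    · exact hVT (frontier_subset_closure hx) ⟨hxF, hxS⟩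
  have hcomp : connectedComponentIn (frontier V)ᶜ a ⊆ V := by
    refine isPreconnected_connectedComponentIn.subset_left_of_subset_union hV
      (isClosed_closure (s := V)).isOpen_compl ?_ ?_ ⟨a, mem_connectedComponentIn fun h => hKF h ha, haV⟩
    · exact disjoint_left.2 fun x hx hx' => hx' (subset_closure hx)
    · intro x hx
      have := connectedComponentIn_subset _ _ hx
      rw [hV.frontier_eq] at this
      by_cases h : x ∈ V
      · exact Or.inl h
      · exact Or.inr fun h' => this ⟨h', h⟩
  exact ⟨frontier V, hK, hKF, hVc.isBounded.subset (hcomp.trans subset_closure),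
    fun h => hVT (subset_closure (hcomp h)) ⟨hbF, hbS⟩⟩

lemma two_holes {G : Set ℂ} (hG : IsOpen G)
    (h : ∃ C₁ C₂ : Set ℂ, IsHole G C₁ ∧ IsHole G C₂ ∧ C₁ ≠ C₂) :
    ∃ K : Set ℂ, IsCompact K ∧ K ⊆ G ∧ ∀ K', K ⊆ K' → K' ⊆ G → IsCompact K' →
      ∃ a : Fin 3 → ℂ, (∀ i, a i ∈ K'ᶜ) ∧ ∀ i j, i ≠ j → a j ∉ connectedComponentIn K'ᶜ (a i) := by
  obtain ⟨_, _, ⟨⟨a, ha, rfl⟩, hab⟩, ⟨⟨b, hb, rfl⟩, hbb⟩, hne⟩ := h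
  have h1 : b ∉ connectedComponentIn Gᶜ a := fun h => hne (connectedComponentIn_eq h)
  have h2 : a ∉ connectedComponentIn Gᶜ b := fun h => hne (connectedComponentIn_eq h).symm
  obtain ⟨K1, k1, k1G, k1b, k1n⟩ := sep_lemma hG.isClosed_compl ha hab h1 hb
  obtain ⟨K2, k2, k2G, k2b, k2n⟩ := sep_lemma hG.isClosed_compl hb hbb h2 ha
  rw [compl_compl] at k1G k2G
  refine ⟨K1 ∪ K2, k1.union k2, union_subset k1G k2G, fun K' hK' hK'G hK'c => ?_⟩
  have m1 := connectedComponentIn_mono a (compl_subset_compl.2 (subset_union_left.trans hK'))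
  have m2 := connectedComponentIn_mono b (compl_subset_compl.2 (subset_union_right.trans hK'))
  obtain ⟨c, hc⟩ : ∃ c, c ∉ K' ∪ connectedComponentIn K'ᶜ a ∪ connectedComponentIn K'ᶜ b := by
    by_contra! hall
    refine NormedSpace.unbounded_univ ℂ ℂ ?_
    exact ((hK'c.isBounded.union (k1b.subset m1)).union (k2b.subset m2)).subset fun x _ => hall x
  simp only [mem_union, not_or] at hc
  have sym : ∀ x y : ℂ, x ∈ K'ᶜ → y ∈ connectedComponentIn K'ᶜ x → x ∈ connectedComponentIn K'ᶜ y := by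
    intro x y hx hy
    rw [← connectedComponentIn_eq hy]; exact mem_connectedComponentIn hx
  have haK : a ∈ K'ᶜ := fun h => ha (hK'G h)
  have hbK : b ∈ K'ᶜ := fun h => hb (hK'G h)
  refine ⟨![a, b, c], ?_, ?_⟩
  · intro i; fin_cases i <;> simp
    · exact haK
    · exact hbK
    · exact hc.1.1
  · intro i j hij
    fin_cases i <;> fin_cases j <;> simp at hij ⊢
    · exact fun h => k1n (m1 h)
    · exact hc.1.2
    · exact fun h => k1n (m1 (sym _ _ hbK h))
    · exact hc.2
    · exact fun h => hc.1.2 (sym _ _ hc.1.1 h)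
    · exact fun h => hc.2 (sym _ _ hc.1.1 h)

end

section
open Set Metric Bornology Filter

lemma no_const {U : Set ℂ} (hU : IsOpen U) {φ : ℂ → ℂ} (hi : InjOn φ U) {z : ℂ} (hz : z ∈ U)
    (h : ∀ᶠ x in nhds z, φ x = φ z) : False := by
  have h1 : ∀ᶠ x in nhdsWithin z {z}ᶜ, φ x = φ z ∧ x ∈ U :=
    (h.and (hU.mem_nhds hz)).filter_mono nhdsWithin_le_nhds
  obtain ⟨x, ⟨hx1, hx2⟩, hx3⟩ := (h1.and self_mem_nhdsWithin).exists
  exact hx3 (hi hx2 hz hx1)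

lemma open_image {U : Set ℂ} (hU : IsOpen U) {φ : ℂ → ℂ} (hd : DifferentiableOn ℂ φ U)
    (hi : InjOn φ U) : ∀ V ⊆ U, IsOpen V → IsOpen (φ '' V) := by
  intro V hVU hV
  rw [isOpen_iff_mem_nhds]
  rintro _ ⟨z, hz, rfl⟩
  have ha : AnalyticAt ℂ φ z := hd.analyticAt (hU.mem_nhds (hVU hz))
  rcases ha.eventually_constant_or_nhds_le_map_nhds with h | h
  · exact (no_const hU hi (hVU hz) h).elim
  · exact h (image_mem_map (hV.mem_nhds hz))

lemma inv_diff {U : Set ℂ} (hU : IsOpen U) {φ : ℂ → ℂ} (hd : DifferentiableOn ℂ φ U)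
    (hi : InjOn φ U) : ∃ ψ : ℂ → ℂ, DifferentiableOn ℂ ψ (φ '' U) ∧ ∀ z ∈ U, ψ (φ z) = z := by
  set ψ := Function.invFunOn φ U with hψ
  have hl : ∀ z ∈ U, ψ (φ z) = z := fun z hz => hi.leftInvOn_invFunOn hz
  have hc : ∀ z ∈ U, ContinuousAt ψ (φ z) := by
    intro z hz
    rw [ContinuousAt, hl z hz]
    intro V hV
    obtain ⟨W, hWV, hW, hzW⟩ := _root_.mem_nhds_iff.1 hV
    have := (open_image hU hd hi (W ∩ U) inter_subset_right (hW.inter hU)).mem_nhds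
      ⟨z, ⟨hzW, hz⟩, rfl⟩
    rw [mem_map]
    filter_upwards [this]
    rintro _ ⟨x, ⟨hxW, hxU⟩, rfl⟩
    rw [mem_preimage, hl x hxU]
    exact hWV hxW
  have hopen := open_image hU hd hi U subset_rfl hU
  have hnz : ∀ z ∈ U, deriv φ z ≠ 0 → DifferentiableAt ℂ ψ (φ z) := by
    intro z hz hne
    have h1 : HasDerivAt φ (deriv φ z) (ψ (φ z)) := by
      rw [hl z hz]; exact (hd.differentiableAt (hU.mem_nhds hz)).hasDerivAt
    refine (HasDerivAt.of_local_left_inverse (hc z hz) h1 hne ?_).differentiableAt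
    filter_upwards [hopen.mem_nhds ⟨z, hz, rfl⟩]
    rintro _ ⟨x, hx, rfl⟩
    rw [hl x hx]
  refine ⟨ψ, ?_, hl⟩
  rintro _ ⟨z, hz, rfl⟩
  apply DifferentiableAt.differentiableWithinAt
  apply AnalyticAt.differentiableAt
  refine Complex.analyticAt_of_differentiable_on_punctured_nhds_of_continuousAt ?_ (hc z hz)
  have hda : AnalyticAt ℂ (deriv φ) z := (hd.analyticAt (hU.mem_nhds hz)).deriv
  rcases hda.eventually_eq_zero_or_eventually_ne_zero with h | h
  · exfalso
    obtain ⟨r, hr, hb⟩ := Metric.eventually_nhds_iff_ball.1 (h.and (hU.mem_nhds hz))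
    apply no_const hU hi hz
    filter_upwards [ball_mem_nhds z hr] with x hx
    exact isOpen_ball.is_const_of_deriv_eq_zero (convex_ball z r).isPreconnected
      (hd.mono fun y hy => (hb y hy).2) (fun y hy => (hb y hy).1) hx (mem_ball_self hr)
  · have ht : Tendsto ψ (nhdsWithin (φ z) {φ z}ᶜ) (nhdsWithin z {z}ᶜ) := by
      rw [tendsto_nhdsWithin_iff]
      constructor
      · have := hc z hz
        rw [ContinuousAt, hl z hz] at this
        exact this.mono_left nhdsWithin_le_nhds
      · have h3 := (hopen.mem_nhds ⟨z, hz, rfl⟩ : φ '' U ∈ nhds (φ z))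
        filter_upwards [nhdsWithin_le_nhds h3, self_mem_nhdsWithin]
        rintro _ ⟨x, hx, rfl⟩ hne
        rw [hl x hx]
        rintro rfl
        exact hne rfl
    have h3 := (hopen.mem_nhds ⟨z, hz, rfl⟩ : φ '' U ∈ nhds (φ z))
    filter_upwards [nhdsWithin_le_nhds h3, ht.eventually h]
    rintro _ ⟨x, hx, rfl⟩ hne
    rw [hl x hx] at hne
    exact hnz x hx hne

end

section
open Set Metric Bornology Filter

def OneComp (E : Set ℂ) : Prop := ∀ z ∈ Eᶜ, ∀ w ∈ Eᶜ, w ∈ connectedComponentIn Eᶜ z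

def ThreeComp (E : Set ℂ) : Prop :=
  ∃ a : Fin 3 → ℂ, (∀ i, a i ∈ Eᶜ) ∧ ∀ i j, i ≠ j → a j ∉ connectedComponentIn Eᶜ (a i)

lemma comp_pt {E : Set ℂ} {z w : ℂ} (h : w ∈ connectedComponentIn Eᶜ z) : w ∈ Eᶜ ∧ z ∈ Eᶜ ∧
    z ∈ connectedComponentIn Eᶜ w := by
  have hz := connectedComponentIn_nonempty_iff.1 ⟨w, h⟩
  refine ⟨connectedComponentIn_subset _ _ h, hz, ?_⟩
  rw [← connectedComponentIn_eq h]
  exact mem_connectedComponentIn hz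

lemma comp_meets_open {E U : Set ℂ} (hE : IsClosed E) (hne : E.Nonempty) (hU : IsOpen U) (hEU : E ⊆ U)
    {z : ℂ} (hz : z ∈ Eᶜ) : ∃ w ∈ U, w ∈ connectedComponentIn Eᶜ z := by
  obtain ⟨x, hx, hxE⟩ := closure_comp_meets hE hne hz
  obtain ⟨w, hw1, hw2⟩ := mem_closure_iff.1 hx U hU (hEU hxE)
  exact ⟨w, hw1, hw2⟩

lemma one_image {U K : Set ℂ} (hU : IsOpen U) (hUc : IsPreconnected U) (hK : IsCompact K)
    (hKn : K.Nonempty)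
    (hKU : K ⊆ U) {φ : ℂ → ℂ} (hφ : ContinuousOn φ U) (hi : InjOn φ U)
    (ho : ∀ V ⊆ U, IsOpen V → IsOpen (φ '' V)) (h : OneComp K) : OneComp (φ '' K) := by
  have hKc : IsClosed (φ '' K) := (hK.image_of_continuousOn (hφ.mono hKU)).isClosed
  have key : ∀ z ∈ (φ '' K)ᶜ, ∃ x ∈ U, x ∈ Kᶜ ∧ φ x ∈ connectedComponentIn (φ '' K)ᶜ z := by
    intro z hz
    obtain ⟨_, ⟨x, hx, rfl⟩, hw2⟩ := comp_meets_open hKc (hKn.image φ) (ho U subset_rfl hU)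
      (image_mono hKU) hz
    exact ⟨x, hx, fun hxK => (comp_pt hw2).1 ⟨x, hxK, rfl⟩, hw2⟩
  intro z hz w hw
  obtain ⟨x, hx1, hx2, hx3⟩ := key z hz
  obtain ⟨y, hy1, hy2, hy3⟩ := key w hw
  have h1 := (transport hU hUc hK hKU hφ hi ho hx1 hy1).1 (h x hx2 y hy2)
  rw [connectedComponentIn_eq hx3, connectedComponentIn_eq h1]
  exact (comp_pt hy3).2.2

lemma three_image {U K : Set ℂ} (hU : IsOpen U) (hUc : IsPreconnected U) (hK : IsCompact K)
    (hKn : K.Nonempty)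
    (hKU : K ⊆ U) {φ : ℂ → ℂ} (hφ : ContinuousOn φ U) (hi : InjOn φ U)
    (ho : ∀ V ⊆ U, IsOpen V → IsOpen (φ '' V)) (h : ThreeComp K) : ThreeComp (φ '' K) := by
  obtain ⟨a, ha, hab⟩ := h
  have key := fun i => comp_meets_open hK.isClosed hKn hU hKU (ha i)
  choose w hwU hw using key
  refine ⟨fun i => φ (w i), ?_, ?_⟩
  · rintro i ⟨x, hx, hxe⟩
    have := hi (hKU hx) (hwU i) hxe
    exact (comp_pt (hw i)).1 (this ▸ hx)
  · intro i j hij hmem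
    have h1 := (transport hU hUc hK hKU hφ hi ho (hwU i) (hwU j)).2 hmem
    apply hab i j hij
    rw [connectedComponentIn_eq (hw i), connectedComponentIn_eq h1]
    exact (comp_pt (hw j)).2.2

lemma case_one {Ω L K : Set ℂ} (hL : IsCompact L) (hK : IsCompact K) (hLc : IsConnected L)
    (hKc : IsConnected K) (hd : Disjoint L K) (hLΩ : OmegaConvex Ω L) (hKΩ : OmegaConvex Ω K)
    (hKs : K ⊆ Ω) (h1 : OneComp K) : OmegaConvex Ω (L ∪ K) := by
  obtain ⟨x, hx⟩ := hLc.nonempty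
  obtain ⟨y, hy⟩ := hKc.nonempty
  have hxK : x ∈ Kᶜ := disjoint_left.1 hd hx
  have hyL : y ∈ Lᶜ := disjoint_right.1 hd hy
  refine union_convex hL.isClosed hK.isClosed hLc hKc hd hLΩ hKΩ hx hy fun hb => ?_
  have hb' : IsBounded (connectedComponentIn Lᶜ y) := by
    refine (hb.union hK.isBounded).subset fun z hz => ?_
    by_cases hzK : z ∈ K
    · exact Or.inr hzK
    · exact Or.inl ⟨hz, h1 x hxK z hzK⟩
  obtain ⟨p, hp, hpΩ⟩ := hLΩ _ ⟨⟨y, hyL, rfl⟩, hb'⟩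
  exact ⟨p, ⟨hp, h1 x hxK p fun h => hpΩ (hKs h)⟩, hpΩ⟩

lemma pigeon {Ω L : Set ℂ} (hΩ : IsOpen Ω) (hL : IsCompact L) (hLs : L ⊆ Ω) (hLΩ : OmegaConvex Ω L)
    (y : ℕ → ℂ) (hy : ∀ i, y i ∈ Lᶜ) : ∃ i j, i < j ∧ y j ∈ connectedComponentIn Lᶜ (y i) := by
  obtain ⟨R, hR0, hR, hout⟩ := exists_R hL
  set T : Set ℂ := (Ωᶜ ∩ closedBall 0 R) ∪ {((R + 1 : ℝ) : ℂ)} with hT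
  have hR1 : R < ‖((R + 1 : ℝ) : ℂ)‖ := by
    rw [Complex.norm_real, Real.norm_eq_abs, abs_of_pos (by linarith)]; linarith
  have hTc : IsCompact T :=
    ((isCompact_closedBall 0 R).inter_left hΩ.isClosed_compl).union isCompact_singleton
  have hTL : T ⊆ Lᶜ := by
    rintro z (⟨hz, -⟩ | hz) hzL
    · exact hz (hLs hzL)
    · have := hR hzL
      rw [mem_singleton_iff.1 hz] at this
      simp only [mem_closedBall, dist_zero_right] at this
      linarith
  have key : ∀ i, ∃ p ∈ T, p ∈ connectedComponentIn Lᶜ (y i) := by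
    intro i
    by_cases hb : IsBounded (connectedComponentIn Lᶜ (y i))
    · obtain ⟨p, hp, hpΩ⟩ := hLΩ _ ⟨⟨y i, hy i, rfl⟩, hb⟩
      refine ⟨p, Or.inl ⟨hpΩ, ?_⟩, hp⟩
      by_contra hpR
      simp only [mem_closedBall, dist_zero_right, not_le] at hpR
      have h2 := hout p hpR
      rw [← connectedComponentIn_eq hp] at h2
      exact not_bounded_out R (hb.subset h2)
    · have : ∃ x ∈ connectedComponentIn Lᶜ (y i), R < ‖x‖ := by
        by_contra! h
        exact hb (isBounded_iff_forall_norm_le.2 ⟨R, h⟩)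
      obtain ⟨x, hx, hxR⟩ := this
      refine ⟨_, Or.inr rfl, ?_⟩
      rw [connectedComponentIn_eq hx]
      exact hout x hxR hR1
  choose p hpT hp using key
  obtain ⟨a, haT, k, hk, hlim⟩ := hTc.tendsto_subseq hpT
  have hnb : connectedComponentIn Lᶜ a ∈ nhds a :=
    hL.isClosed.isOpen_compl.connectedComponentIn.mem_nhds (mem_connectedComponentIn (hTL haT))
  obtain ⟨M, hM⟩ := eventually_atTop.1 (hlim.eventually hnb)
  refine ⟨k M, k (M + 1), hk (Nat.lt_succ_self M), ?_⟩
  have e1 : p (k M) ∈ connectedComponentIn Lᶜ a := hM M le_rfl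
  have e2 : p (k (M + 1)) ∈ connectedComponentIn Lᶜ a := hM (M + 1) (Nat.le_succ M)
  rw [connectedComponentIn_eq (hp (k M)), ← connectedComponentIn_eq e1, connectedComponentIn_eq e2]
  exact (comp_pt (hp _)).2.2

lemma case_three {Ω L : Set ℂ} (hLc : IsConnected L)
    {A B : Set ℂ} (hA : IsCompact A) (hAc : IsConnected A) (hBc : IsConnected B)
    (hLA : Disjoint L A) (hLB : Disjoint L B) (hAB : Disjoint A B) (hAΩ : OmegaConvex Ω A)
    (h3 : ThreeComp A) {x a b : ℂ} (hx : x ∈ L) (ha : a ∈ A) (hb : b ∈ B)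
    (hab : b ∈ connectedComponentIn Lᶜ a)
    (hCB : Disjoint B (connectedComponentIn Lᶜ a ∩ connectedComponentIn Aᶜ x))
    (hbdd : IsBounded (connectedComponentIn Lᶜ b ∩ connectedComponentIn Bᶜ x))
    (hsub : connectedComponentIn Lᶜ b ∩ connectedComponentIn Bᶜ x ⊆ Ω) : False := by
  have hxA : x ∈ Aᶜ := disjoint_left.1 hLA hx
  have hbA : b ∈ Aᶜ := disjoint_right.1 hAB hb
  -- B lies in component of `a`
  have hBcomp : B ⊆ connectedComponentIn Lᶜ b :=
    hBc.isPreconnected.subset_connectedComponentIn hb (fun z hz => disjoint_right.1 hLB hz)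
  rw [← connectedComponentIn_eq hab] at hBcomp hbdd hsub
  have hBD : ∀ z ∈ B, z ∉ connectedComponentIn Aᶜ x := fun z hz h =>
    disjoint_left.1 hCB hz ⟨hBcomp hz, h⟩
  have hBA : B ⊆ connectedComponentIn Aᶜ b :=
    hBc.isPreconnected.subset_connectedComponentIn hb (fun z hz => disjoint_right.1 hAB hz)
  obtain ⟨w, hw, hww⟩ := h3
  -- third component
  obtain ⟨i, hi1, hi2⟩ : ∃ i, x ∉ connectedComponentIn Aᶜ (w i) ∧ b ∉ connectedComponentIn Aᶜ (w i) := by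
    by_contra! hcon
    have key : ∀ i j c, c ∈ connectedComponentIn Aᶜ (w i) → c ∈ connectedComponentIn Aᶜ (w j) → i = j := by
      intro i j c hi hj
      by_contra hij
      apply hww i j hij
      rw [connectedComponentIn_eq hi]
      exact (comp_pt hj).2.2
    have h01 : (0 : Fin 3) ≠ 1 := by decide
    have h02 : (0 : Fin 3) ≠ 2 := by decide
    have h12 : (1 : Fin 3) ≠ 2 := by decide
    by_cases x0 : x ∈ connectedComponentIn Aᶜ (w 0)
    · have x1 : x ∉ connectedComponentIn Aᶜ (w 1) := fun h => h01 (key _ _ _ x0 h)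
      have x2 : x ∉ connectedComponentIn Aᶜ (w 2) := fun h => h02 (key _ _ _ x0 h)
      exact h12 (key _ _ _ (hcon 1 x1) (hcon 2 x2))
    · by_cases x1 : x ∈ connectedComponentIn Aᶜ (w 1)
      · have x2 : x ∉ connectedComponentIn Aᶜ (w 2) := fun h => h12 (key _ _ _ x1 h)
        exact h02 (key _ _ _ (hcon 0 x0) (hcon 2 x2))
      · exact h01 (key _ _ _ (hcon 0 x0) (hcon 1 x1))
  set D := connectedComponentIn Aᶜ (w i) with hD
  have hDA : IsPreconnected (D ∪ A) := comp_union_preconnected hA.isClosed hAc (hw i)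
  have hxLA : L ⊆ connectedComponentIn Aᶜ x :=
    hLc.isPreconnected.subset_connectedComponentIn hx (fun z hz => disjoint_left.1 hLA hz)
  have hdisj : ∀ c z, c ∉ D → z ∈ connectedComponentIn Aᶜ c → z ∉ D := by
    intro c z hc hz hzD
    apply hc
    rw [hD, connectedComponentIn_eq hzD]
    exact (comp_pt hz).2.2
  have hDL : D ∪ A ⊆ connectedComponentIn Lᶜ a := by
    refine hDA.subset_connectedComponentIn (Or.inr ha) ?_
    rintro z (hz | hz) hzL
    · exact hdisj x z hi1 (hxLA hzL) hz
    · exact disjoint_left.1 hLA hzL hz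
  have hDx : IsPreconnected ((D ∪ A) ∪ (connectedComponentIn Aᶜ x ∪ A)) :=
    hDA.union a (Or.inr ha) (Or.inr ha) (comp_union_preconnected hA.isClosed hAc hxA)
  have hDB : D ⊆ connectedComponentIn Bᶜ x := by
    have : (D ∪ A) ∪ (connectedComponentIn Aᶜ x ∪ A) ⊆ connectedComponentIn Bᶜ x := by
      refine hDx.subset_connectedComponentIn (Or.inr (Or.inl (mem_connectedComponentIn hxA))) ?_
      rintro z ((hz | hz) | (hz | hz)) hzB
      · exact hdisj b z hi2 (hBA hzB) hz
      · exact disjoint_left.1 hAB hz hzB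
      · exact hBD z hzB hz
      · exact disjoint_left.1 hAB hz hzB
    exact fun z hz => this (Or.inl (Or.inl hz))
  have hDsub : D ⊆ connectedComponentIn Lᶜ a ∩ connectedComponentIn Bᶜ x :=
    fun z hz => ⟨hDL (Or.inl hz), hDB hz⟩
  obtain ⟨p, hp, hpΩ⟩ := hAΩ D ⟨⟨w i, hw i, rfl⟩, hbdd.subset hDsub⟩
  exact hpΩ (hsub (hDsub hp))

end

section
open Set Metric Bornology Filter

lemma core {G Ω : Set ℂ} (hG : IsOpen G) (hGconn : IsConnected G)
    (hΩ : IsOpen Ω) (hΩconn : IsConnected Ω)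
    (hGtop : HasNoHole G ∨ ∃ C₁ C₂ : Set ℂ, IsHole G C₁ ∧ IsHole G C₂ ∧ C₁ ≠ C₂)
    {φ : ℕ → ℂ → ℂ} (hφd : ∀ n, DifferentiableOn ℂ (φ n) G)
    (hφm : ∀ n, Set.MapsTo (φ n) G Ω)
    (hinj : EventuallyInjective G φ)
    (hcond : ∀ K : Set ℂ, K ⊆ G → IsCompact K → OmegaConvex G K →
        ∀ L : Set ℂ, L ⊆ Ω → IsCompact L →
          ∀ N : ℕ, ∃ n ≥ N, (φ n '' K) ∩ L = ∅ ∧ OmegaConvex Ω (φ n '' K))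
    {K L : Set ℂ} (hK : IsCompact K) (hKG : K ⊆ G) (hL : IsCompact L) (hLΩ : L ⊆ Ω) :
    ∃ (n : ℕ) (K' L' U : Set ℂ), IsCompact K' ∧ IsCompact L' ∧ K ⊆ K' ∧ L ⊆ L' ∧ K' ⊆ U ∧ U ⊆ G ∧
      IsOpen U ∧ InjOn (φ n) U ∧ L' ⊆ Ω ∧ Disjoint L' (φ n '' K') ∧ OmegaConvex Ω (L' ∪ φ n '' K') := by
  obtain ⟨L', hL', hL'c, hL'Ω, hLL', hL'cv⟩ := nice_enlarge hΩ hΩconn hL hLΩ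
  obtain ⟨K', hK', hK'c, hK'G, hKK', hK'cv, htop⟩ : ∃ K', IsCompact K' ∧ IsConnected K' ∧ K' ⊆ G ∧
      K ⊆ K' ∧ OmegaConvex G K' ∧ (OneComp K' ∨ ThreeComp K') := by
    rcases hGtop with h | h
    · obtain ⟨K', hK', hK'c, hK'G, hKK', hK'cv⟩ := nice_enlarge hG hGconn hK hKG
      refine ⟨K', hK', hK'c, hK'G, hKK', hK'cv, Or.inl fun z hz w hw => ?_⟩
      exact comp_eq_of_unbounded hK' (noHole_unbounded hK'G h hK'cv hz)
        (noHole_unbounded hK'G h hK'cv hw)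
    · obtain ⟨K2, hK2, hK2G, h3⟩ := two_holes hG h
      obtain ⟨K', hK', hK'c, hK'G, hKK', hK'cv⟩ := nice_enlarge hG hGconn (hK.union hK2)
        (union_subset hKG hK2G)
      exact ⟨K', hK', hK'c, hK'G, subset_union_left.trans hKK', hK'cv,
        Or.inr (h3 K' (subset_union_right.trans hKK') hK'G hK')⟩
  obtain ⟨k0, hk0⟩ := hK'c.nonempty
  obtain ⟨x, hx⟩ := hL'c.nonempty
  obtain ⟨N, hN⟩ := hinj K' hK'G hK'
  have hV : ∀ n ≥ N, ∃ V, IsOpen V ∧ IsPreconnected V ∧ K' ⊆ V ∧ V ⊆ G ∧ InjOn (φ n) V := by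
    intro n hn
    obtain ⟨U, hU, hKU, hUG, hi⟩ := hN n hn
    refine ⟨connectedComponentIn U k0, hU.connectedComponentIn, isPreconnected_connectedComponentIn,
      hK'c.isPreconnected.subset_connectedComponentIn hk0 hKU,
      (connectedComponentIn_subset _ _).trans hUG, hi.mono (connectedComponentIn_subset _ _)⟩
  have hcont : ∀ n, ContinuousOn (φ n) K' := fun n => (hφd n).continuousOn.mono hK'G
  have hcomp : ∀ n, IsCompact (φ n '' K') := fun n => hK'.image_of_continuousOn (hcont n)
  have hconn : ∀ n, IsConnected (φ n '' K') := fun n => hK'c.image _ (hcont n)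
  have hsubΩ : ∀ n, φ n '' K' ⊆ Ω := fun n => by
    rintro _ ⟨z, hz, rfl⟩; exact hφm n (hK'G hz)
  suffices h : ∃ n ≥ N, Disjoint L' (φ n '' K') ∧ OmegaConvex Ω (L' ∪ φ n '' K') by
    obtain ⟨n, hn, hd, hcv⟩ := h
    obtain ⟨V, hV1, -, hV3, hV4, hV5⟩ := hV n hn
    exact ⟨n, K', L', V, hK', hL', hKK', hLL', hV3, hV4, hV1, hV5, hL'Ω, hd, hcv⟩
  rcases htop with h1 | h3
  · obtain ⟨n, hn, hdis, hcv⟩ := hcond K' hK'G hK' hK'cv L' hL'Ω hL' N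
    obtain ⟨V, hV1, hV2, hV3, hV4, hV5⟩ := hV n hn
    have hd : Disjoint L' (φ n '' K') := (disjoint_iff_inter_eq_empty.2 hdis).symm
    have hdV := (hφd n).mono hV4
    exact ⟨n, hn, hd, case_one hL' (hcomp n) hL'c (hconn n) hd hL'cv hcv (hsubΩ n)
      (one_image hV1 hV2 hK' ⟨k0, hk0⟩ hV3 hdV.continuousOn hV5 (open_image hV1 hdV hV5) h1)⟩
  · by_contra hno
    push Not at hno
    set C : ℕ → Set ℂ := fun n =>
      connectedComponentIn L'ᶜ (φ n k0) ∩ connectedComponentIn (φ n '' K')ᶜ x with hC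
    set P : ℕ → Prop := fun n => N ≤ n ∧ Disjoint L' (φ n '' K') ∧ OmegaConvex Ω (φ n '' K') with hP
    have hbad : ∀ n, P n → IsBounded (C n) ∧ C n ⊆ Ω := by
      rintro n ⟨hn, hd, hcv⟩
      by_contra hcon
      apply hno n hn hd
      refine union_convex hL'.isClosed (hcomp n).isClosed hL'c (hconn n) hd hL'cv hcv hx
        (mem_image_of_mem _ hk0) fun hb => ?_
      by_contra hne
      exact hcon ⟨hb, fun z hz => by
        by_contra hzΩ
        exact hne ⟨z, hz, hzΩ⟩⟩
    obtain ⟨f, hf1, hf2⟩ := exists_seq_of_forall_finset_exists P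
      (fun i j => Disjoint (φ j '' K') (φ i '' K' ∪ C i)) (by
        intro s hs
        set Lb : Set ℂ := L' ∪ ⋃ i ∈ s, (φ i '' K' ∪ closure (C i)) with hLb
        have hLbc : IsCompact Lb := by
          refine hL'.union (s.isCompact_biUnion fun i hi => ?_)
          exact (hcomp i).union (hbad i (hs i hi)).1.isCompact_closure
        have hLbΩ : Lb ⊆ Ω := by
          refine union_subset hL'Ω (iUnion₂_subset fun i hi => union_subset (hsubΩ i) ?_)
          intro z hz
          have h1 := closure_comp_subset hL'.isClosed _ (closure_mono inter_subset_left hz)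
          have h2 := closure_comp_subset (hcomp i).isClosed _ (closure_mono inter_subset_right hz)
          rcases h1 with h1 | h1
          · rcases h2 with h2 | h2
            · exact (hbad i (hs i hi)).2 ⟨h1, h2⟩
            · exact hsubΩ i h2
          · exact hL'Ω h1
        obtain ⟨n, hn, hdis, hcv⟩ := hcond K' hK'G hK' hK'cv Lb hLbΩ hLbc N
        have hd : Disjoint (φ n '' K') Lb := disjoint_iff_inter_eq_empty.2 hdis
        refine ⟨n, ⟨hn, (hd.mono_right subset_union_left).symm, hcv⟩, fun i hi => ?_⟩
        refine hd.mono_right (subset_trans ?_ subset_union_right)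
        exact subset_trans (union_subset_union_right _ subset_closure)
          (subset_biUnion_of_mem (u := fun i => φ i '' K' ∪ closure (C i)) hi))
    obtain ⟨i, j, hij, hmem⟩ := pigeon hΩ hL' hL'Ω hL'cv (fun i => φ (f i) k0) (fun i h =>
      disjoint_left.1 (hf1 i).2.1 h (mem_image_of_mem _ hk0))
    have hd := hf2 i j hij
    obtain ⟨V, hV1, hV2, hV3, hV4, hV5⟩ := hV (f i) (hf1 i).1
    have hdV := (hφd (f i)).mono hV4
    exact case_three hL'c (hcomp (f i)) (hconn (f i)) (hconn (f j)) (hf1 i).2.1 (hf1 j).2.1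
      (hd.mono_right subset_union_left).symm (hf1 i).2.2
      (three_image hV1 hV2 hK' ⟨k0, hk0⟩ hV3 hdV.continuousOn hV5 (open_image hV1 hdV hV5) h3)
      hx (mem_image_of_mem _ hk0) (mem_image_of_mem _ hk0) hmem (hd.mono_right subset_union_right)
      (hbad _ (hf1 j)).1 (hbad _ (hf1 j)).2

end

section
open Set Metric Bornology Filter

lemma cconst {R : ℝ} (hR : 0 < R) : ∃ c : ℂ, c ≠ 0 ∧
    (∫ x in (-R)..R, ((x : ℂ) + (-R : ℝ) * Complex.I)⁻¹) - (∫ x in (-R)..R, ((x : ℂ) + (R : ℝ) * Complex.I)⁻¹)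
    + Complex.I * (∫ y in (-R)..R, (((R : ℝ) : ℂ) + y * Complex.I)⁻¹)
    - Complex.I * (∫ y in (-R)..R, (((-R : ℝ) : ℂ) + y * Complex.I)⁻¹) = c := by
  have key : ∀ x : ℝ, (0:ℝ) < x ^ 2 + R ^ 2 := fun x => by positivity
  have keyc : ∀ x : ℝ, ((x:ℂ) ^ 2 + (R:ℂ) ^ 2) ≠ 0 := fun x => by
    exact_mod_cast (key x).ne'
  have e : ∀ x s : ℝ, s ^ 2 = R ^ 2 → (x : ℂ) + s * Complex.I ≠ 0 := by
    intro x s hs h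
    have := congrArg Complex.im h
    simp at this
    subst this
    nlinarith
  have e' : ∀ x s : ℝ, s ^ 2 = R ^ 2 → (s : ℂ) + x * Complex.I ≠ 0 := by
    intro x s hs h
    have := congrArg Complex.re h
    simp at this
    subst this
    nlinarith
  have ii : ∀ s : ℝ, s ^ 2 = R ^ 2 → IntervalIntegrable (fun x : ℝ => ((x : ℂ) + s * Complex.I)⁻¹) MeasureTheory.volume (-R) R := by
    intro s hs
    apply Continuous.intervalIntegrable
    exact Continuous.inv₀ (by fun_prop) (fun x => e x s hs)
  have ii' : ∀ s : ℝ, s ^ 2 = R ^ 2 → IntervalIntegrable (fun x : ℝ => ((s : ℂ) + x * Complex.I)⁻¹) MeasureTheory.volume (-R) R := by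
    intro s hs
    apply Continuous.intervalIntegrable
    exact Continuous.inv₀ (by fun_prop) (fun x => e' x s hs)
  have hneg : (-R) ^ 2 = R ^ 2 := by ring
  refine ⟨Complex.I * ((4 * R * ∫ x in (-R)..R, (x ^ 2 + R ^ 2)⁻¹ : ℝ) : ℂ), ?_, ?_⟩
  · refine mul_ne_zero Complex.I_ne_zero ?_
    norm_cast
    refine mul_ne_zero (by positivity) (ne_of_gt ?_)
    refine intervalIntegral.intervalIntegral_pos_of_pos (f := fun x : ℝ => (x ^ 2 + R ^ 2)⁻¹) ?_ (fun x => inv_pos.2 (key x)) (by linarith)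
    apply Continuous.intervalIntegrable
    exact Continuous.inv₀ (by fun_prop) (fun x => (key x).ne')
  · rw [← intervalIntegral.integral_sub (ii _ hneg) (ii _ rfl), add_sub_assoc, ← mul_sub,
      ← intervalIntegral.integral_sub (ii' _ rfl) (ii' _ hneg)]
    have e1 : ∀ x : ℝ, ((x : ℂ) + (-R : ℝ) * Complex.I)⁻¹ - ((x : ℂ) + (R : ℝ) * Complex.I)⁻¹ =
        (2 * R * Complex.I) * (((x ^ 2 + R ^ 2)⁻¹ : ℝ) : ℂ) := by
      intro x
      rw [inv_sub_inv (e x _ hneg) (e x _ rfl)]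
      push_cast
      rw [← div_eq_mul_inv]
      congr 1
      · ring
      · ring_nf; rw [Complex.I_sq]; ring
    have e2 : ∀ x : ℝ, ((R : ℂ) + x * Complex.I)⁻¹ - (((-R : ℝ) : ℂ) + x * Complex.I)⁻¹ =
        (2 * R) * (((x ^ 2 + R ^ 2)⁻¹ : ℝ) : ℂ) := by
      intro x
      rw [inv_sub_inv (e' x _ rfl) (e' x _ hneg)]
      push_cast
      rw [← div_eq_mul_inv, ← neg_div_neg_eq]
      congr 1
      · ring
      · ring_nf; rw [Complex.I_sq]; ring
    simp only [e1, e2]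
    rw [intervalIntegral.integral_const_mul, intervalIntegral.integral_const_mul,
      intervalIntegral.integral_ofReal]
    push_cast
    ring

lemma pomp0 {R : ℝ} (hR : 0 < R) {c : ℂ} (hc :
    (∫ x in (-R)..R, ((x : ℂ) + (-R : ℝ) * Complex.I)⁻¹) - (∫ x in (-R)..R, ((x : ℂ) + (R : ℝ) * Complex.I)⁻¹)
    + Complex.I * (∫ y in (-R)..R, (((R : ℝ) : ℂ) + y * Complex.I)⁻¹)
    - Complex.I * (∫ y in (-R)..R, (((-R : ℝ) : ℂ) + y * Complex.I)⁻¹) = c)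
    {v : ℂ → ℂ} (hv : ContDiff ℝ 1 v) (h0 : DifferentiableAt ℂ v 0)
    (hre : ∀ ζ : ℂ, R ≤ |ζ.re| → v ζ = 0) (him : ∀ ζ : ℂ, R ≤ |ζ.im| → v ζ = 0)
    (hk : Continuous (fun ζ => (Complex.I * fderiv ℝ v ζ 1 - fderiv ℝ v ζ Complex.I) / ζ)) :
    -v 0 * c = ∫ x in (-R)..R, ∫ y in (-R)..R,
      (Complex.I * fderiv ℝ v (x + y * Complex.I) 1 - fderiv ℝ v (x + y * Complex.I) Complex.I) / (x + y * Complex.I) := by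
  set f : ℂ → ℂ := dslope v 0 with hf
  set f' : ℂ → ℂ →L[ℝ] ℂ := fun ζ => fderiv ℝ f ζ with hf'
  have hfne : ∀ ζ : ℂ, ζ ≠ 0 → f ζ = (v ζ - v 0) * ζ⁻¹ := by
    intro ζ hζ
    rw [hf, dslope_of_ne _ hζ, slope_def_field, sub_zero, div_eq_mul_inv]
  have hd : ∀ ζ : ℂ, ζ ≠ 0 → HasFDerivAt f
      ((v ζ - v 0) • (((ContinuousLinearMap.toSpanSingleton ℂ (-(ζ ^ 2)⁻¹)) : ℂ →L[ℂ] ℂ).restrictScalars ℝ)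
        + ζ⁻¹ • fderiv ℝ v ζ) ζ := by
    intro ζ hζ
    have h1 : HasFDerivAt (fun ζ => v ζ - v 0) (fderiv ℝ v ζ) ζ :=
      ((hv.differentiable one_ne_zero).differentiableAt.hasFDerivAt).sub_const _
    have h2 : HasFDerivAt (fun ζ : ℂ => ζ⁻¹)
      (((ContinuousLinearMap.toSpanSingleton ℂ (-(ζ ^ 2)⁻¹)) : ℂ →L[ℂ] ℂ).restrictScalars ℝ) ζ :=
      (hasDerivAt_inv hζ).hasFDerivAt.restrictScalars ℝ
    refine (h1.mul h2).congr_of_eventuallyEq ?_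
    filter_upwards [isOpen_ne.mem_nhds hζ] with x hx
    exact hfne x hx
  have hk' : ∀ ζ : ℂ, ζ ≠ 0 → Complex.I • f' ζ 1 - f' ζ Complex.I =
      (Complex.I * fderiv ℝ v ζ 1 - fderiv ℝ v ζ Complex.I) / ζ := by
    intro ζ hζ
    rw [hf']
    simp only [(hd ζ hζ).fderiv]
    simp
    field_simp
    ring
  have hfc : Continuous f := by
    rw [continuous_iff_continuousAt]
    intro ζ
    by_cases hζ : ζ = 0
    · subst hζ
      exact continuousAt_dslope_same.2 h0
    · exact (hd ζ hζ).continuousAt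
  have hae : (fun ζ => Complex.I • f' ζ 1 - f' ζ Complex.I) =ᵐ[MeasureTheory.volume]
      (fun ζ => (Complex.I * fderiv ℝ v ζ 1 - fderiv ℝ v ζ Complex.I) / ζ) := by
    have : ({0}ᶜ : Set ℂ) ∈ MeasureTheory.ae MeasureTheory.volume := by
      rw [MeasureTheory.mem_ae_iff]
      simp
    filter_upwards [this] with ζ hζ
    exact hk' ζ hζ
  have main := Complex.integral_boundary_rect_of_hasFDerivAt_real_off_countable f f'
    ⟨-R, -R⟩ ⟨R, R⟩ {0} (countable_singleton 0) hfc.continuousOn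
    (fun x hx => (hd x hx.2).differentiableAt.hasFDerivAt)
    (by
      refine MeasureTheory.Integrable.congr (f := (fun ζ => (Complex.I * fderiv ℝ v ζ 1 - fderiv ℝ v ζ Complex.I) / ζ)) ?_
        (MeasureTheory.ae_restrict_of_ae hae.symm)
      exact hk.continuousOn.integrableOn_compact
        (isCompact_uIcc.reProdIm isCompact_uIcc))
  simp only at main
  have b1 : ∀ s t : ℝ, |t| = R → f (s + t * Complex.I) = -v 0 * ((s : ℂ) + t * Complex.I)⁻¹ := by
    intro s t ht
    rw [hfne, him _ (by simp [ht]), zero_sub]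
    intro h
    have := congrArg Complex.im h
    simp at this
    rw [this] at ht; simp at ht; linarith
  have b2 : ∀ s t : ℝ, |s| = R → f (s + t * Complex.I) = -v 0 * ((s : ℂ) + t * Complex.I)⁻¹ := by
    intro s t ht
    rw [hfne, hre _ (by simp [ht]), zero_sub]
    intro h
    have := congrArg Complex.re h
    simp at this
    rw [this] at ht; simp at ht; linarith
  have aR : |R| = R := abs_of_pos hR
  have aR' : |(-R)| = R := by rw [abs_neg, aR]
  simp only [b1 _ _ aR, b1 _ _ aR', b2 _ _ aR, b2 _ _ aR', intervalIntegral.integral_const_mul,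
    smul_eq_mul] at main
  rw [← hc]
  rw [show ∀ p q r s t : ℂ, t * (p - q + Complex.I * r - Complex.I * s) = t * p - t * q + Complex.I * (t * r) -
    Complex.I * (t * s) by intros; ring, main]
  have hnull : ∀ᵐ x : ℝ, x ≠ 0 := by
    rw [MeasureTheory.ae_iff]; simp
  refine intervalIntegral.integral_congr_ae ?_
  filter_upwards [hnull] with x hx _
  refine intervalIntegral.integral_congr fun y _ => ?_
  refine hk' _ fun h => hx ?_
  have := congrArg Complex.re h
  simpa using this

end

section
open Set Metric Bornology Filter
open scoped Manifold ContDiff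

lemma cutoff {K V : Set ℂ} (hK : IsCompact K) (hV : IsOpen V) (hKV : K ⊆ V) {h : ℂ → ℂ}
    (hh : DifferentiableOn ℂ h V) : ∃ (u : ℂ → ℂ) (W K2 : Set ℂ), ContDiff ℝ 1 u ∧ IsOpen W ∧ K ⊆ W ∧
      W ⊆ V ∧ EqOn u h W ∧ IsCompact K2 ∧ ∀ z ∉ K2, u z = 0 := by
  obtain ⟨K2, hK2, hKK2, hK2V⟩ := exists_compact_between hK hV hKV
  obtain ⟨K1, hK1, hKK1, hK12⟩ := exists_compact_between hK isOpen_interior hKK2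
  obtain ⟨χ, hχ0, hχ1, -⟩ := exists_contMDiffMap_zero_one_of_isClosed (M := ℂ) (n := 1) (I := 𝓘(ℝ, ℂ))
    (s := (interior K2)ᶜ) (t := K1)
    isOpen_interior.isClosed_compl hK1.isClosed (disjoint_left.2 fun x hx hx1 => hx (hK12 hx1))
  have hχs : ContDiff ℝ 1 χ := (χ.contMDiff.contDiff).of_le (by simp)
  refine ⟨fun z => (χ z : ℂ) * h z, interior K1, K2, ?_, isOpen_interior, hKK1,
    (interior_subset.trans hK12).trans (interior_subset.trans hK2V), ?_, hK2, ?_⟩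
  · rw [contDiff_iff_contDiffAt]
    intro z
    by_cases hz : z ∈ V
    · have h1 : ContDiffAt ℝ 1 h z :=
        ((hh.analyticAt (hV.mem_nhds hz)).contDiffAt (n := 1)).restrict_scalars ℝ
      exact (Complex.ofRealCLM.contDiff.contDiffAt.comp z hχs.contDiffAt).mul h1
    · have hz2 : z ∈ K2ᶜ := fun hz2 => hz (hK2V hz2)
      refine (contDiffAt_const (c := (0:ℂ))).congr_of_eventuallyEq ?_
      filter_upwards [hK2.isClosed.isOpen_compl.mem_nhds hz2] with x hx
      have : χ x = 0 := hχ0 (fun hx' => hx (interior_subset hx'))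
      simp [this]
  · intro z hz
    have : χ z = 1 := hχ1 (interior_subset hz)
    simp [this]
  · intro z hz
    have : χ z = 0 := hχ0 (fun hx' => hz (interior_subset hx'))
    simp [this]

lemma cauchy_repr {K V : Set ℂ} (hK : IsCompact K) (hV : IsOpen V) (hKV : K ⊆ V) {h : ℂ → ℂ}
    (hh : DifferentiableOn ℂ h V) : ∃ (g : ℂ → ℂ) (W : Set ℂ) (M : ℝ) (c : ℂ), Continuous g ∧ IsOpen W ∧
      K ⊆ W ∧ (∀ w ∈ W, g w = 0) ∧ c ≠ 0 ∧ ∀ z ∈ K, c * h z =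
        ∫ x in (-M)..M, ∫ y in (-M)..M, g (x + y * Complex.I) / (x + y * Complex.I - z) := by
  obtain ⟨u, W, K2, hu, hW, hKW, hWV, huh, hK2, hu0⟩ := cutoff hK hV hKV hh
  obtain ⟨M, hM0, hM⟩ := (hK.union hK2).isBounded.exists_pos_norm_lt
  set R := 2 * M + 1 with hR
  have hR0 : 0 < R := by positivity
  obtain ⟨c, hc, hcc⟩ := cconst hR0
  set g : ℂ → ℂ := fun w => Complex.I * fderiv ℝ u w 1 - fderiv ℝ u w Complex.I with hg
  have hfc : Continuous (fderiv ℝ u) := hu.continuous_fderiv one_ne_zero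
  have hgc : Continuous g := by fun_prop
  have hgW : ∀ w ∈ W, g w = 0 := by
    intro w hw
    have h1 : HasFDerivAt u ((fderiv ℂ h w).restrictScalars ℝ) w := by
      refine ((hh.differentiableAt (hV.mem_nhds (hWV hw))).hasFDerivAt.restrictScalars ℝ).congr_of_eventuallyEq ?_
      filter_upwards [hW.mem_nhds hw] with x hx using huh hx
    simp only [hg, h1.fderiv, ContinuousLinearMap.coe_restrictScalars']
    rw [← smul_eq_mul, ← map_smul]
    simp
  have hg0 : ∀ w ∉ K2, g w = 0 := by
    intro w hw
    have h1 : HasFDerivAt u (0 : ℂ →L[ℝ] ℂ) w := by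
      refine (hasFDerivAt_const (0:ℂ) w).congr_of_eventuallyEq ?_
      filter_upwards [hK2.isClosed.isOpen_compl.mem_nhds hw] with x hx using hu0 x hx
    simp [hg, h1.fderiv]
  refine ⟨g, W, M, -c, hgc, hW, hKW, hgW, neg_ne_zero.2 hc, fun z hz => ?_⟩
  have hzM : ‖z‖ < M := hM z (Or.inl hz)
  have hzre := (Complex.abs_re_le_norm z).trans_lt hzM
  have hzim := (Complex.abs_im_le_norm z).trans_lt hzM
  have hgre : ∀ w : ℂ, M ≤ |w.re| → g w = 0 := fun w hw => hg0 w fun h2 =>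
    absurd ((Complex.abs_re_le_norm w).trans_lt (hM w (Or.inr h2))) (not_lt.2 hw)
  have hgim : ∀ w : ℂ, M ≤ |w.im| → g w = 0 := fun w hw => hg0 w fun h2 =>
    absurd ((Complex.abs_im_le_norm w).trans_lt (hM w (Or.inr h2))) (not_lt.2 hw)
  have hure : ∀ w : ℂ, M ≤ |w.re| → u w = 0 := fun w hw => hu0 w fun h2 =>
    absurd ((Complex.abs_re_le_norm w).trans_lt (hM w (Or.inr h2))) (not_lt.2 hw)
  have huim : ∀ w : ℂ, M ≤ |w.im| → u w = 0 := fun w hw => hu0 w fun h2 =>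
    absurd ((Complex.abs_im_le_norm w).trans_lt (hM w (Or.inr h2))) (not_lt.2 hw)
  set v : ℂ → ℂ := fun ζ => u (z + ζ) with hv
  have hfv : ∀ ζ, fderiv ℝ v ζ = fderiv ℝ u (z + ζ) := fun ζ => fderiv_comp_add_left (f := u) z
  have hkc : Continuous (fun ζ => g (z + ζ) / ζ) := by
    rw [continuous_iff_continuousAt]
    intro ζ
    by_cases h0 : ζ = 0
    · subst h0
      have : (fun ζ => g (z + ζ) / ζ) =ᶠ[nhds 0] fun _ => 0 := by
        have hcont : ContinuousAt (fun ζ : ℂ => z + ζ) 0 := by fun_prop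
        filter_upwards [hcont.preimage_mem_nhds (hW.mem_nhds (by simpa using hKW hz))] with ζ hζ
        rw [hgW _ hζ, zero_div]
      exact continuousAt_const.congr this.symm
    · exact ContinuousAt.div (by fun_prop) continuousAt_id h0
  have hp := pomp0 hR0 hcc (v := v) (by fun_prop)
    (by
      have h1 : DifferentiableAt ℂ u (z + 0) := by
        rw [add_zero]
        refine (hh.differentiableAt (hV.mem_nhds (hKV hz))).congr_of_eventuallyEq ?_
        filter_upwards [hW.mem_nhds (hKW hz)] with x hx using huh hx
      exact h1.comp (0:ℂ) (by fun_prop))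
    (fun ζ hζ => hure _ (by
      rw [Complex.add_re]
      have := abs_sub_abs_le_abs_sub ζ.re (-z.re)
      rw [abs_neg, sub_neg_eq_add, add_comm ζ.re] at this
      linarith))
    (fun ζ hζ => huim _ (by
      rw [Complex.add_im]
      have := abs_sub_abs_le_abs_sub ζ.im (-z.im)
      rw [abs_neg, sub_neg_eq_add, add_comm ζ.im] at this
      linarith))
    (by simpa only [hfv] using hkc)
  have hv0 : v 0 = h z := by simp only [hv, add_zero]; exact huh (hKW hz)
  rw [hv0] at hp
  rw [neg_mul, mul_comm, ← neg_mul, hp]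
  set H : ℝ → ℝ → ℂ := fun x y => g (x + y * Complex.I) / (x + y * Complex.I - z) with hH
  have hHx : ∀ x y, H x y ≠ 0 → |x| < M := by
    intro x y hne
    by_contra hcon
    exact hne (by simp only [hH]; rw [hgre _ (by simpa using hcon), zero_div])
  have hHy : ∀ x y, H x y ≠ 0 → |y| < M := by
    intro x y hne
    by_contra hcon
    exact hne (by simp only [hH]; rw [hgim _ (by simpa using hcon), zero_div])
  have eq1 : ∀ x y : ℝ, (Complex.I * fderiv ℝ v (x + y * Complex.I) 1 - fderiv ℝ v (x + y * Complex.I) Complex.I) / (x + y * Complex.I) = H (z.re + x) (z.im + y) := by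
    intro x y
    have hz' : z = z.re + z.im * Complex.I := (Complex.re_add_im z).symm
    have : (((z.re + x : ℝ) : ℂ) + ((z.im + y : ℝ) : ℂ) * Complex.I) = z + (x + y * Complex.I) := by
      conv_rhs => rw [hz']
      push_cast; ring
    simp only [hH]
    rw [this, hfv, add_sub_cancel_left]
  simp only [eq1]
  have habs := abs_lt.1 hzre
  have habs' := abs_lt.1 hzim
  have eqin : ∀ x : ℝ, ∫ y in (-R)..R, H x (z.im + y) = ∫ y in (-M)..M, H x y := by
    intro x
    rw [intervalIntegral.integral_comp_add_left (fun y => H x y),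
      intervalIntegral.integral_eq_integral_of_support_subset,
      intervalIntegral.integral_eq_integral_of_support_subset]
    · intro y hy
      have := abs_lt.1 (hHy x y hy)
      exact ⟨this.1, this.2.le⟩
    · intro y hy
      have := abs_lt.1 (hHy x y hy)
      exact ⟨by linarith, by linarith⟩
  simp only [eqin]
  change _ = ∫ x in (-M)..M, ∫ y in (-M)..M, H x y
  rw [intervalIntegral.integral_comp_add_left (fun x => ∫ y in (-M)..M, H x y),
      intervalIntegral.integral_eq_integral_of_support_subset,
      intervalIntegral.integral_eq_integral_of_support_subset]
  · intro x hx
    have : |x| < M := by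
      by_contra hcon
      apply hx
      have : ∀ y, H x y = 0 := fun y => by
        by_contra h; exact hcon (hHx x y h)
      simp [this]
    have := abs_lt.1 this
    exact ⟨this.1, this.2.le⟩
  · intro x hx
    have : |x| < M := by
      by_contra hcon
      apply hx
      have : ∀ y, H x y = 0 := fun y => by
        by_contra h; exact hcon (hHx x y h)
      simp [this]
    have := abs_lt.1 this
    exact ⟨by linarith, by linarith⟩

end

section
open Set Metric Bornology Filter

def holoSub (Ω K : Set ℂ) : Subalgebra ℂ C(K, ℂ) where
  carrier := {F | ∃ f : ℂ → ℂ, DifferentiableOn ℂ f Ω ∧ ∀ z : K, F z = f z}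
  mul_mem' := by
    rintro a b ⟨f, hf, hf'⟩ ⟨g, hg, hg'⟩
    exact ⟨fun z => f z * g z, hf.mul hg, fun z => by simp [hf', hg']⟩
  add_mem' := by
    rintro a b ⟨f, hf, hf'⟩ ⟨g, hg, hg'⟩
    exact ⟨fun z => f z + g z, hf.add hg, fun z => by simp [hf', hg']⟩
  algebraMap_mem' := by
    intro r
    exact ⟨fun _ => r, differentiableOn_const r, fun z => by simp⟩

lemma inv_mem {Ω K : Set ℂ} [CompactSpace K] (hKΩ : K ⊆ Ω) (hcv : OmegaConvex Ω K)
    {w : ℂ} (hw : w ∉ K) {F : C(K, ℂ)} (hF : ∀ z : K, F z = (w - z)⁻¹) :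
    F ∈ (holoSub Ω K).topologicalClosure := by
  set A := (holoSub Ω K).topologicalClosure with hA
  have hAc : IsClosed (A : Set C(K, ℂ)) := (holoSub Ω K).isClosed_topologicalClosure
  set X : C(K, ℂ) := ⟨Subtype.val, continuous_subtype_val⟩ with hX
  have hsA : ∀ G ∈ holoSub Ω K, G ∈ A := fun G hG => (holoSub Ω K).le_topologicalClosure hG
  have hXA : X ∈ A := hsA _ ⟨id, differentiableOn_id, fun z => rfl⟩
  set x : A := ⟨X, hXA⟩ with hx
  have hspec : spectrum ℂ (x : C(K, ℂ)) = K := by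
    rw [hx, ContinuousMap.spectrum_eq_range]
    simp [hX]
  have hns : w ∉ spectrum ℂ x := by
    intro hws
    have hb := Subalgebra.spectrum_isBounded_connectedComponentIn A x hws
    have hu := Subalgebra.spectrum_sUnion_connectedComponentIn (𝕜 := ℂ) A x
    rw [hspec] at hb hu
    obtain ⟨p, hp, hpΩ⟩ := hcv _ ⟨⟨w, hw, rfl⟩, hb⟩
    have hps : p ∈ spectrum ℂ x := by
      rw [hu]
      exact Or.inr (mem_biUnion (x := w) ⟨hws, hw⟩ hp)
    apply hps
    have hpz : ∀ z ∈ Ω, p - z ≠ 0 := fun z hz h => hpΩ (by rwa [sub_eq_zero.1 h])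
    set I : C(K, ℂ) := ⟨fun z => (p - z)⁻¹, by
      refine Continuous.inv₀ (by fun_prop) fun z => hpz z (hKΩ z.2)⟩ with hI
    have hIA : I ∈ A := hsA _ ⟨fun z => (p - z)⁻¹, by
      refine DifferentiableOn.inv (by fun_prop) hpz, fun z => rfl⟩
    refine isUnit_iff_exists.2 ⟨⟨I, hIA⟩, ?_, ?_⟩
    · apply Subtype.ext
      ext z
      exact mul_inv_cancel₀ (hpz z (hKΩ z.2))
    · apply Subtype.ext
      ext z
      exact inv_mul_cancel₀ (hpz z (hKΩ z.2))
  rw [spectrum.notMem_iff] at hns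
  obtain ⟨b, hb, -⟩ := isUnit_iff_exists.1 hns
  have : F = (b : C(K, ℂ)) := by
    ext z
    have h1 := congrArg (fun y : A => (y : C(K, ℂ)) z) hb
    have h2 : (w - z) * (b : C(K, ℂ)) z = 1 := h1
    rw [hF]
    exact (eq_inv_of_mul_eq_one_right h2).symm
  rw [this]
  exact b.2

theorem runge {Ω K V : Set ℂ} (hK : IsCompact K) (hKΩ : K ⊆ Ω) (hcv : OmegaConvex Ω K)
    (hV : IsOpen V) (hKV : K ⊆ V) {h : ℂ → ℂ} (hh : DifferentiableOn ℂ h V) {ε : ℝ} (hε : 0 < ε) :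
    ∃ F : ℂ → ℂ, DifferentiableOn ℂ F Ω ∧ ∀ z ∈ K, ‖F z - h z‖ < ε := by
  have : CompactSpace K := isCompact_iff_compactSpace.1 hK
  set A := (holoSub Ω K).topologicalClosure with hA
  have hAc : IsClosed (A : Set C(K, ℂ)) := (holoSub Ω K).isClosed_topologicalClosure
  have : CompleteSpace A := hAc.completeSpace_coe
  obtain ⟨g, W, M, c, hg, hW, hKW, hgW, hc, hrep⟩ := cauchy_repr hK hV hKV hh
  have hunc : Continuous (fun p : ℂ × K => g p.1 / (p.1 - p.2)) := by
    rw [continuous_iff_continuousAt]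
    rintro ⟨w, z⟩
    by_cases hw : w ∈ W
    · have : (fun p : ℂ × K => g p.1 / (p.1 - p.2)) =ᶠ[nhds (w, z)] fun _ => 0 := by
        filter_upwards [continuous_fst.continuousAt.preimage_mem_nhds (hW.mem_nhds hw)] with p hp
        rw [hgW _ hp, zero_div]
      exact continuousAt_const.congr this.symm
    · refine ContinuousAt.div (by fun_prop) (by fun_prop) ?_
      intro h0
      have h0 : w - z = 0 := h0
      exact hw (hKW (by rw [sub_eq_zero.1 h0]; exact z.2))
  set Gm : ℂ → C(K, ℂ) := fun w => ⟨fun z => g w / (w - z), by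
    exact hunc.comp (by fun_prop : Continuous fun z : K => (w, z))⟩ with hGm
  have hGc : Continuous Gm := ContinuousMap.continuous_of_continuous_uncurry _ hunc
  have hGA : ∀ w, Gm w ∈ A := by
    intro w
    by_cases hw : w ∈ W
    · have : Gm w = 0 := by ext z; simp [hGm, hgW w hw]
      rw [this]; exact A.zero_mem
    · have hwK : w ∉ K := fun h => hw (hKW h)
      set I : C(K, ℂ) := ⟨fun z => (w - z)⁻¹, by
        refine Continuous.inv₀ (by fun_prop) fun z => ?_
        intro h0
        exact hwK (by rw [sub_eq_zero.1 h0]; exact z.2)⟩ with hI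
      have : Gm w = g w • I := by ext z; simp [hGm, hI, div_eq_mul_inv]
      rw [this]
      exact A.smul_mem (inv_mem hKΩ hcv hwK (fun z => rfl)) _
  set GA : ℂ → A := fun w => ⟨Gm w, hGA w⟩ with hGAd
  have hGAc : Continuous GA := hGc.subtype_mk _
  set a : A := ∫ x in (-M)..M, ∫ y in (-M)..M, GA (x + y * Complex.I) with ha
  have hcont2 : Continuous (Function.uncurry fun x y : ℝ => GA (x + y * Complex.I)) := by
    refine hGAc.comp ?_
    fun_prop
  have hev : ∀ z : K, (a : C(K, ℂ)) z = c * h z := by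
    intro z
    set ev : A →L[ℂ] ℂ := (ContinuousMap.evalCLM ℂ z).comp (A.toSubmodule.subtypeL) with hevd
    have h1 : (a : C(K, ℂ)) z = ev a := rfl
    rw [h1, ha, ← ContinuousLinearMap.intervalIntegral_comp_comm, hrep z z.2]
    · refine intervalIntegral.integral_congr fun x _ => ?_
      rw [← ContinuousLinearMap.intervalIntegral_comp_comm]
      · rfl
      · apply Continuous.intervalIntegrable
        exact hGAc.comp (by fun_prop)
    · apply Continuous.intervalIntegrable
      exact intervalIntegral.continuous_parametric_intervalIntegral_of_continuous' hcont2 _ _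
  have hmem : (c⁻¹ • (a : C(K, ℂ))) ∈ A := A.smul_mem a.2 _
  obtain ⟨F, ⟨f, hf, hfF⟩, hFd⟩ := Metric.mem_closure_iff.1 (show (c⁻¹ • (a : C(K, ℂ))) ∈ closure ((holoSub Ω K : Set C(K, ℂ))) from hmem) ε hε
  refine ⟨f, hf, fun z hz => ?_⟩
  have h1 := (ContinuousMap.dist_lt_iff hε).1 hFd ⟨z, hz⟩
  rw [hfF, dist_comm, dist_eq_norm] at h1
  rw [ContinuousMap.smul_apply, hev ⟨z, hz⟩, smul_eq_mul, inv_mul_cancel_left₀ hc] at h1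
  exact h1

end

section
open Set Metric Bornology Filter

lemma glue {V₁ V₂ : Set ℂ} (h₁ : IsOpen V₁) (h₂ : IsOpen V₂) (hd : Disjoint V₁ V₂) {f₁ f₂ : ℂ → ℂ}
    (d₁ : DifferentiableOn ℂ f₁ V₁) (d₂ : DifferentiableOn ℂ f₂ V₂) :
    ∃ h : ℂ → ℂ, DifferentiableOn ℂ h (V₁ ∪ V₂) ∧ EqOn h f₁ V₁ ∧ EqOn h f₂ V₂ := by
  classical
  have e1 : EqOn (fun z => if z ∈ V₁ then f₁ z else f₂ z) f₁ V₁ := fun z hz => by simp [hz]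
  have e2 : EqOn (fun z => if z ∈ V₁ then f₁ z else f₂ z) f₂ V₂ := fun z hz => by
    simp [disjoint_right.1 hd hz]
  refine ⟨fun z => if z ∈ V₁ then f₁ z else f₂ z, ?_, e1, e2⟩
  rintro z (hz | hz)
  · exact ((d₁.congr e1).differentiableAt (h₁.mem_nhds hz)).differentiableWithinAt
  · exact ((d₂.congr e2).differentiableAt (h₂.mem_nhds hz)).differentiableWithinAt

lemma sep_nhds {A B : Set ℂ} (hA : IsCompact A) (hB : IsCompact B) (h : Disjoint A B) :
    ∃ V₁ V₂ : Set ℂ, IsOpen V₁ ∧ IsOpen V₂ ∧ A ⊆ V₁ ∧ B ⊆ V₂ ∧ Disjoint V₁ V₂ :=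
  SeparatedNhds.of_isCompact_isCompact hA hB h

lemma convex_add_finite {G K T : Set ℂ} (hK : IsCompact K) (hT : T.Finite) (hTG : T ⊆ G)
    (hd : Disjoint K T) (hcv : OmegaConvex G K) : OmegaConvex G (K ∪ T) := by
  rintro C ⟨⟨z, hz, rfl⟩, hb⟩
  have hTc : IsPreconnected Tᶜ :=
    (hT.countable.isConnected_compl_of_one_lt_rank (by simp [Complex.rank_real_complex])).isPreconnected
  have hzK : z ∈ Kᶜ := fun h => hz (Or.inl h)
  have hzT : z ∈ Tᶜ := fun h => hz (Or.inr h)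
  rw [comp_union_eq hK.isClosed hT.isClosed hd, hTc.connectedComponentIn hzT] at hb ⊢
  have hb' : IsBounded (connectedComponentIn Kᶜ z) := by
    refine (hb.union hT.isBounded).subset fun x hx => ?_
    by_cases hxT : x ∈ T
    · exact Or.inr hxT
    · exact Or.inl ⟨hx, hxT⟩
  obtain ⟨p, hp, hpG⟩ := hcv _ ⟨⟨z, hzK, rfl⟩, hb'⟩
  exact ⟨p, ⟨hp, fun h => hpG (hTG h)⟩, hpG⟩

lemma hole_meets {G K₀ K₁ U : Set ℂ} (hK₀ : IsCompact K₀) (hne : K₀.Nonempty)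
    (hcv : OmegaConvex G K₀) (hK₁ : IsCompact K₁) (h01 : K₀ ⊆ interior K₁) (h1U : K₁ ⊆ U)
    (hU : IsOpen U) (hUG : U ⊆ G) {φ : ℂ → ℂ} (hd : DifferentiableOn ℂ φ U) (hi : InjOn φ U)
    {z : ℂ} (hz : z ∈ (φ '' K₀)ᶜ) :
    ∃ x ∈ frontier K₁, φ x ∈ connectedComponentIn (φ '' K₀)ᶜ z := by
  by_contra! hcon
  set C := connectedComponentIn (φ '' K₀)ᶜ z with hC
  have hK0U : K₀ ⊆ U := (h01.trans interior_subset).trans h1U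
  have hcl0 : IsClosed (φ '' K₀) := (hK₀.image_of_continuousOn (hd.continuousOn.mono hK0U)).isClosed
  have hcl1 : IsClosed (φ '' K₁) := (hK₁.image_of_continuousOn (hd.continuousOn.mono h1U)).isClosed
  have hop : IsOpen (φ '' interior K₁) := open_image hU hd hi _ (interior_subset.trans h1U) isOpen_interior
  obtain ⟨_, ⟨x0, hx0, rfl⟩, hx0C⟩ := comp_meets_open hcl0 (hne.image φ) hop (image_mono h01) hz
  have hCsub : C ⊆ φ '' interior K₁ := by
    refine isPreconnected_connectedComponentIn.subset_left_of_subset_union hop hcl1.isOpen_compl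
      ?_ ?_ ⟨φ x0, hx0C, mem_image_of_mem _ hx0⟩
    · exact disjoint_left.2 fun y hy hy' => hy' (image_mono interior_subset hy)
    · intro y hy
      by_cases hy1 : y ∈ φ '' K₁
      · obtain ⟨x, hx, rfl⟩ := hy1
        left
        refine ⟨x, ?_, rfl⟩
        by_contra hxi
        refine hcon x ?_ hy
        rw [hK₁.isClosed.frontier_eq]
        exact ⟨hx, hxi⟩
      · exact Or.inr hy1
  set E := interior K₁ ∩ φ ⁻¹' C with hE
  have hCo : IsOpen C := hcl0.isOpen_compl.connectedComponentIn
  have hEo : IsOpen E :=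
    (hd.continuousOn.mono (interior_subset.trans h1U)).isOpen_inter_preimage isOpen_interior hCo
  have hEcl : ∀ x ∈ closure E, x ∉ K₀ → x ∈ E := by
    intro x hx hxK
    have hx1 : x ∈ K₁ := closure_minimal (inter_subset_left.trans interior_subset) hK₁.isClosed hx
    have hcx : ContinuousAt φ x := (hd.differentiableAt (hU.mem_nhds (h1U hx1))).continuousAt
    have h2 : φ x ∈ closure C := by
      have := mem_closure_image hcx hx
      exact closure_mono (by rintro _ ⟨y, hy, rfl⟩; exact hy.2) this
    rcases closure_comp_subset hcl0 z h2 with h3 | h3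
    · obtain ⟨y, hy, hyx⟩ := hCsub h3
      have := hi (h1U (interior_subset hy)) (h1U hx1) hyx
      subst this
      exact ⟨hy, h3⟩
    · obtain ⟨y, hy, hyx⟩ := h3
      have := hi (hK0U hy) (h1U hx1) hyx
      subst this
      exact absurd hy hxK
  have hx0K : x0 ∈ K₀ᶜ := fun h => (comp_pt hx0C).1 (mem_image_of_mem _ h)
  have hDE : connectedComponentIn K₀ᶜ x0 ⊆ E := by
    refine isPreconnected_connectedComponentIn.subset_left_of_subset_union hEo
      isClosed_closure.isOpen_compl (disjoint_left.2 fun y hy hy' => hy' (subset_closure hy)) ?_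
      ⟨x0, mem_connectedComponentIn hx0K, hx0, hx0C⟩
    intro y hy
    by_cases hyE : y ∈ closure E
    · exact Or.inl (hEcl y hyE (connectedComponentIn_subset _ _ hy))
    · exact Or.inr hyE
  have hDK : connectedComponentIn K₀ᶜ x0 ⊆ K₁ := hDE.trans (inter_subset_left.trans interior_subset)
  obtain ⟨p, hp, hpG⟩ := hcv _ ⟨⟨x0, hx0K, rfl⟩, hK₁.isBounded.subset hDK⟩
  exact hpG (hUG (h1U (hDK hp)))

lemma omegaConvex_empty (Ω : Set ℂ) : OmegaConvex Ω ∅ := by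
  rintro C ⟨⟨z, hz, rfl⟩, hb⟩
  exfalso
  rw [compl_empty, isPreconnected_univ.connectedComponentIn (mem_univ z)] at hb
  exact NormedSpace.unbounded_univ ℂ ℂ hb

theorem forward {G Ω : Set ℂ} (hG : IsOpen G) (hΩ : IsOpen Ω)
    {φ : ℕ → ℂ → ℂ} (hφd : ∀ n, DifferentiableOn ℂ (φ n) G)
    (hφm : ∀ n, Set.MapsTo (φ n) G Ω)
    (hinj : EventuallyInjective G φ) {f : ℂ → ℂ} (hf : DifferentiableOn ℂ f Ω)
    (hu : UniversalFor G φ f) {K₀ : Set ℂ} (hKG : K₀ ⊆ G) (hK₀ : IsCompact K₀)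
    (hcv : OmegaConvex G K₀) {L : Set ℂ} (hL : L ⊆ Ω) (hLc : IsCompact L) (N : ℕ) :
    ∃ n ≥ N, (φ n '' K₀) ∩ L = ∅ ∧ OmegaConvex Ω (φ n '' K₀) := by
  rcases K₀.eq_empty_or_nonempty with rfl | hne
  · exact ⟨N, le_rfl, by simp, by simpa using omegaConvex_empty Ω⟩
  obtain ⟨K, hK, h0K, hKG'⟩ := exists_compact_between hK₀ hG hKG
  obtain ⟨K₁, hK₁, h01, h1K⟩ := exists_compact_between hK₀ isOpen_interior h0K
  set O := interior K \ K₀ with hO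
  have hOo : IsOpen O := isOpen_interior.sdiff hK₀.isClosed
  have hfrO : frontier K₁ ⊆ O := by
    intro x hx
    rw [hK₁.isClosed.frontier_eq] at hx
    exact ⟨h1K hx.1, fun h => hx.2 (h01 h)⟩
  have hfrc : IsCompact (frontier K₁) := hK₁.of_isClosed_subset isClosed_frontier hK₁.isClosed.frontier_subset
  obtain ⟨T, hTf, hcover⟩ := hfrc.elim_nhds_subcover (fun x => connectedComponentIn O x)
    (fun x hx => hOo.connectedComponentIn.mem_nhds (mem_connectedComponentIn (hfrO hx)))
  have hTO : (T : Set ℂ) ⊆ O := fun t ht => hfrO (hTf t ht)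
  have hTG : (T : Set ℂ) ⊆ G := fun t ht => hKG' (interior_subset (hTO ht).1)
  have hdT : Disjoint K₀ (T : Set ℂ) := disjoint_right.2 fun t ht => (hTO ht).2
  have hTc : IsCompact (T : Set ℂ) := T.finite_toSet.isCompact
  have hcvT := convex_add_finite hK₀ T.finite_toSet hTG hdT hcv
  obtain ⟨V₁, V₂, hV₁, hV₂, h0V, hTV, hVd⟩ := sep_nhds hK₀ hTc hdT
  obtain ⟨h, hhd, hh1, hh2⟩ := glue hV₁ hV₂ hVd (f₁ := fun _ => 0) (f₂ := fun _ => 1)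
    (differentiableOn_const _) (differentiableOn_const _)
  obtain ⟨g, hg, hgh⟩ := runge (hK₀.union hTc) (union_subset hKG hTG) hcvT (hV₁.union hV₂)
    (union_subset_union h0V hTV) hhd (ε := 1/10) (by norm_num)
  have hg0 : ∀ z ∈ K₀, ‖g z‖ < 1/10 := fun z hz => by
    have := hgh z (Or.inl hz)
    rw [hh1 (h0V hz)] at this
    simpa using this
  have hg1 : ∀ z ∈ T, ‖g z - 1‖ < 1/10 := fun z hz => by
    have := hgh z (Or.inr hz)
    rw [hh2 (hTV hz)] at this
    simpa using this
  obtain ⟨Ni, hNi⟩ := hinj K hKG' hK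
  set N' := max N Ni with hN'
  obtain ⟨B, hB⟩ := hK.exists_bound_of_continuousOn (hg.continuousOn.mono hKG')
  obtain ⟨B1, hB1⟩ := hLc.exists_bound_of_continuousOn (hf.continuousOn.mono hL)
  have hBj : ∀ j, ∃ b, ∀ z ∈ K, ‖f (φ j z)‖ ≤ b := fun j =>
    hK.exists_bound_of_continuousOn (f := fun z => f (φ j z))
      ((hf.continuousOn.comp (hφd j).continuousOn (hφm j)).mono hKG')
  choose b hb using hBj
  set M : ℝ := |B| + 1 + |B1| + ∑ j ∈ Finset.range N', |b j| with hM
  have hMj : ∀ j < N', |B| + 1 + |b j| ≤ M := by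
    intro j hj
    have := Finset.single_le_sum (f := fun j => |b j|) (fun i _ => abs_nonneg (b i)) (Finset.mem_range.2 hj)
    have h3 := abs_nonneg B1
    linarith
  have hM1 : |B| + 1 + |B1| ≤ M := by
    have : 0 ≤ ∑ j ∈ Finset.range N', |b j| := Finset.sum_nonneg fun i _ => abs_nonneg _
    linarith
  obtain ⟨n, hn⟩ := hu (fun z => M + g z) (hg.const_add _) K hKG' hK (1/10) (by norm_num)
  have hlow : ∀ z ∈ K, M - |B| - 1/10 < ‖f (φ n z)‖ := by
    intro z hz
    have h1 := hn z hz
    have h2 : ‖(M : ℂ)‖ = M := by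
      rw [Complex.norm_real, Real.norm_eq_abs, abs_of_nonneg]
      have := abs_nonneg B; have := abs_nonneg B1; linarith
    have h3 : (M : ℂ) = f (φ n z) - (f (φ n z) - (M + g z)) - g z := by ring
    have h4 : ‖(M : ℂ)‖ ≤ ‖f (φ n z)‖ + ‖f (φ n z) - (M + g z)‖ + ‖g z‖ := by
      conv_lhs => rw [h3]
      exact (norm_sub_le _ _).trans (add_le_add_left (norm_sub_le _ _) _)
    have h5 := (hB z hz).trans (le_abs_self B)
    linarith
  have hK0K : K₀ ⊆ K := h0K.trans interior_subset
  have hnN : N' ≤ n := by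
    by_contra hlt
    obtain ⟨k0, hk0⟩ := hne
    have h1 := hlow k0 (hK0K hk0)
    have h2 := (hb n k0 (hK0K hk0)).trans (le_abs_self _)
    have h3 := hMj n (not_le.1 hlt)
    linarith
  obtain ⟨U, hU, hKU, hUG, hi⟩ := hNi n ((le_max_right _ _).trans hnN)
  refine ⟨n, (le_max_left _ _).trans hnN, ?_, ?_⟩
  · rw [eq_empty_iff_forall_notMem]
    rintro _ ⟨⟨z, hz, rfl⟩, hzL⟩
    have h1 := hlow z (hK0K hz)
    have h2 := (hB1 _ hzL).trans (le_abs_self _)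
    linarith
  · rintro C ⟨⟨z, hz, rfl⟩, hbd⟩
    by_contra hcon
    set C := connectedComponentIn (φ n '' K₀)ᶜ z with hC
    have hCΩ : C ⊆ Ω := fun x hx => by
      by_contra hxΩ
      exact hcon ⟨x, hx, hxΩ⟩
    have hdU := (hφd n).mono hUG
    obtain ⟨x, hx, hxC⟩ := hole_meets hK₀ hne hcv hK₁ h01 (h1K.trans (interior_subset.trans hKU)) hU hUG
      hdU hi hz
    obtain ⟨t, htT, hxt⟩ := mem_iUnion₂.1 (hcover hx)
    have hOU : O ⊆ U := sdiff_subset.trans (interior_subset.trans hKU)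
    have himg : φ n '' connectedComponentIn O t ⊆ C := by
      rw [hC, connectedComponentIn_eq hxC]
      refine IsPreconnected.subset_connectedComponentIn ?_ (mem_image_of_mem _ hxt) ?_
      · exact isPreconnected_connectedComponentIn.image _
          (hdU.continuousOn.mono ((connectedComponentIn_subset _ _).trans hOU))
      · rintro _ ⟨y, hy, rfl⟩ ⟨y', hy', he⟩
        have hyO := connectedComponentIn_subset _ _ hy
        have := hi (hKU (hK0K hy')) (hOU hyO) he
        subst this
        exact hyO.2 hy'
    have htC : φ n t ∈ C := himg (mem_image_of_mem _ (mem_connectedComponentIn (hTO htT)))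
    have hcl0 : IsClosed (φ n '' K₀) :=
      (hK₀.image_of_continuousOn ((hφd n).continuousOn.mono hKG)).isClosed
    have hclC := closure_comp_subset hcl0 z
    have hCo : IsOpen C := hcl0.isOpen_compl.connectedComponentIn
    have hclΩ : closure C ⊆ Ω := by
      intro y hy
      rcases hclC hy with h | ⟨w, hw, rfl⟩
      · exact hCΩ h
      · exact hφm n (hKG hw)
    have hdcc : DiffContOnCl ℂ (fun w => f w - M) C :=
      ⟨(hf.mono hCΩ).sub_const _, ((hf.continuousOn.mono hclΩ).sub continuousOn_const)⟩
    have hmax := Complex.norm_le_of_forall_mem_frontier_norm_le (C := 2/10) hbd hdcc (by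
      intro w hw
      rw [hCo.frontier_eq] at hw
      rcases hclC hw.1 with h | ⟨y, hy, rfl⟩
      · exact absurd h hw.2
      · have h1 := hn y (hK0K hy)
        have h2 := hg0 y hy
        have h3 : f (φ n y) - M = (f (φ n y) - (M + g y)) + g y := by ring
        rw [h3]
        exact (norm_add_le _ _).trans (by linarith)) (subset_closure htC)
    have h1 := hn t (interior_subset (hTO htT).1)
    have h2 := hg1 t htT
    have h3 : (1 : ℂ) = (f (φ n t) - M) - (f (φ n t) - (M + g t)) - (g t - 1) := by ring
    have h4 : ‖(1:ℂ)‖ ≤ ‖f (φ n t) - M‖ + ‖f (φ n t) - (M + g t)‖ + ‖g t - 1‖ := by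
      conv_lhs => rw [h3]
      exact (norm_sub_le _ _).trans (add_le_add_left (norm_sub_le _ _) _)
    rw [norm_one] at h4
    linarith

end

section
open Set Metric Bornology Filter

lemma approx_step {G Ω : Set ℂ} (hG : IsOpen G) (hGconn : IsConnected G)
    (hΩ : IsOpen Ω) (hΩconn : IsConnected Ω)
    (hGtop : HasNoHole G ∨ ∃ C₁ C₂ : Set ℂ, IsHole G C₁ ∧ IsHole G C₂ ∧ C₁ ≠ C₂)
    {φ : ℕ → ℂ → ℂ} (hφd : ∀ n, DifferentiableOn ℂ (φ n) G)
    (hφm : ∀ n, Set.MapsTo (φ n) G Ω)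
    (hinj : EventuallyInjective G φ)
    (hcond : ∀ K : Set ℂ, K ⊆ G → IsCompact K → OmegaConvex G K →
        ∀ L : Set ℂ, L ⊆ Ω → IsCompact L →
          ∀ N : ℕ, ∃ n ≥ N, (φ n '' K) ∩ L = ∅ ∧ OmegaConvex Ω (φ n '' K))
    {K L : Set ℂ} (hK : IsCompact K) (hKG : K ⊆ G) (hL : IsCompact L) (hLΩ : L ⊆ Ω)
    {f g : ℂ → ℂ} (hf : DifferentiableOn ℂ f Ω) (hg : DifferentiableOn ℂ g G)
    {ε δ : ℝ} (hε : 0 < ε) (hδ : 0 < δ) :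
    ∃ (n : ℕ) (F : ℂ → ℂ), DifferentiableOn ℂ F Ω ∧ (∀ z ∈ L, ‖F z - f z‖ < ε) ∧
      ∀ z ∈ K, ‖F (φ n z) - g z‖ < δ := by
  obtain ⟨n, K', L', U, hK', hL', hKK, hLL, hKU, hUG, hU, hi, hLΩ', hdis, hcv⟩ :=
    core hG hGconn hΩ hΩconn hGtop hφd hφm hinj hcond hK hKG hL hLΩ
  have hdU : DifferentiableOn ℂ (φ n) U := (hφd n).mono hUG
  obtain ⟨ψ, hψd, hψ⟩ := inv_diff hU hdU hi
  have hoU : IsOpen (φ n '' U) := open_image hU hdU hi U subset_rfl hU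
  have hcK : IsCompact (φ n '' K') := hK'.image_of_continuousOn (hdU.continuousOn.mono hKU)
  obtain ⟨V₁, V₂, o₁, o₂, s₁, s₂, hd⟩ := sep_nhds hL' hcK hdis
  have hgψ : DifferentiableOn ℂ (g ∘ ψ) (V₂ ∩ φ n '' U) := by
    refine hg.comp (hψd.mono inter_subset_right) ?_
    rintro _ ⟨_, z, hz, rfl⟩
    rw [hψ z hz]; exact hUG hz
  obtain ⟨h, hhd, e₁, e₂⟩ := glue (o₁.inter hΩ) (o₂.inter hoU)
    (hd.mono inter_subset_left inter_subset_left) (hf.mono inter_subset_right) hgψ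
  have hsub : L' ∪ φ n '' K' ⊆ (V₁ ∩ Ω) ∪ (V₂ ∩ φ n '' U) :=
    union_subset_union (subset_inter s₁ hLΩ') (subset_inter s₂ (image_mono hKU))
  have hsubΩ : L' ∪ φ n '' K' ⊆ Ω := by
    refine union_subset hLΩ' ?_
    rintro _ ⟨z, hz, rfl⟩
    exact hφm n (hUG (hKU hz))
  obtain ⟨F, hFd, hF⟩ := runge (hL'.union hcK) hsubΩ hcv
    ((o₁.inter hΩ).union (o₂.inter hoU)) hsub hhd (lt_min hε hδ)
  refine ⟨n, F, hFd, fun z hz => ?_, fun z hz => ?_⟩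
  · have := hF z (Or.inl (hLL hz))
    rw [e₁ ⟨s₁ (hLL hz), hLΩ hz⟩] at this
    exact this.trans_le (min_le_left _ _)
  · have hz' := hKK hz
    have := hF (φ n z) (Or.inr (mem_image_of_mem _ hz'))
    rw [e₂ ⟨s₂ (mem_image_of_mem _ hz'), mem_image_of_mem _ (hKU hz')⟩] at this
    simp only [Function.comp, hψ z (hKU hz')] at this
    exact this.trans_le (min_le_right _ _)

open Classical in
noncomputable def extC {Ω : Set ℂ} (F : C(Ω, ℂ)) (z : ℂ) : ℂ := if h : z ∈ Ω then F ⟨z, h⟩ else 0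

lemma extC_of {Ω : Set ℂ} (F : C(Ω, ℂ)) {z : ℂ} (h : z ∈ Ω) : extC F z = F ⟨z, h⟩ := by
  simp [extC, h]

noncomputable def resC {Ω : Set ℂ} (f : ℂ → ℂ) (hf : ContinuousOn f Ω) : C(Ω, ℂ) :=
  ⟨Ω.domRestrict f, by exact continuousOn_iff_continuous_domRestrict.1 hf⟩

lemma ext_resC {Ω : Set ℂ} (f : ℂ → ℂ) (hf : ContinuousOn f Ω) {z : ℂ} (h : z ∈ Ω) :
    extC (resC f hf) z = f z := by
  rw [extC_of _ h]; rfl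

def holoC (Ω : Set ℂ) : Set C(Ω, ℂ) := {F | DifferentiableOn ℂ (extC F) Ω}

lemma resC_mem {Ω : Set ℂ} (f : ℂ → ℂ) (hf : DifferentiableOn ℂ f Ω) :
    resC f hf.continuousOn ∈ holoC Ω :=
  hf.congr fun _ hz => ext_resC f _ hz

lemma holoC_closed {Ω : Set ℂ} (hΩ : IsOpen Ω) : IsClosed (holoC Ω) := by
  have : LocallyCompactSpace Ω := hΩ.locallyCompactSpace
  refine isClosed_of_closure_subset fun F hF => ?_
  rw [mem_closure_iff_nhdsWithin_neBot] at hF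
  have ht : Tendsto (id : C(Ω, ℂ) → C(Ω, ℂ)) (nhdsWithin F (holoC Ω)) (nhds F) :=
    tendsto_id.mono_left nhdsWithin_le_nhds
  rw [ContinuousMap.tendsto_iff_tendstoLocallyUniformly] at ht
  have h2 : TendstoLocallyUniformlyOn (fun H : C(Ω, ℂ) => extC H) (extC F)
      (nhdsWithin F (holoC Ω)) Ω := by
    rw [tendstoLocallyUniformlyOn_iff_tendstoLocallyUniformly_comp_coe]
    convert ht using 1
    · funext H z; simp [extC_of H z.2]
    · funext z; simp [extC_of F z.2]
  exact h2.differentiableOn (eventually_mem_nhdsWithin) hΩ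

lemma nhd_basisC {Ω : Set ℂ} (F : C(Ω, ℂ)) {O : Set C(Ω, ℂ)} : O ∈ nhds F ↔
    ∃ (K : Set Ω) (ε : ℝ), IsCompact K ∧ 0 < ε ∧ ∀ H : C(Ω, ℂ), (∀ z ∈ K, ‖H z - F z‖ < ε) → H ∈ O := by
  have hb := (Metric.uniformity_basis_dist (α := ℂ)).compactConvergenceUniformity (α := Ω)
  rw [(nhds_basis_uniformity' hb).mem_iff]
  constructor
  · rintro ⟨⟨K, ε⟩, ⟨hK, hε⟩, h⟩
    refine ⟨K, ε, hK, hε, fun H hH => h ?_⟩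
    intro z hz
    have := hH z hz
    rwa [← dist_eq_norm, dist_comm] at this
  · rintro ⟨K, ε, hK, hε, h⟩
    refine ⟨⟨K, ε⟩, ⟨hK, hε⟩, fun H hH => h H fun z hz => ?_⟩
    have : dist (F z) (H z) < ε := hH z hz
    rwa [← dist_eq_norm, dist_comm]

lemma backward {G Ω : Set ℂ} (hG : IsOpen G) (hGconn : IsConnected G)
    (hΩ : IsOpen Ω) (hΩconn : IsConnected Ω)
    (hGtop : HasNoHole G ∨ ∃ C₁ C₂ : Set ℂ, IsHole G C₁ ∧ IsHole G C₂ ∧ C₁ ≠ C₂)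
    {φ : ℕ → ℂ → ℂ} (hφd : ∀ n, DifferentiableOn ℂ (φ n) G)
    (hφm : ∀ n, Set.MapsTo (φ n) G Ω)
    (hinj : EventuallyInjective G φ)
    (hcond : ∀ K : Set ℂ, K ⊆ G → IsCompact K → OmegaConvex G K →
        ∀ L : Set ℂ, L ⊆ Ω → IsCompact L →
          ∀ N : ℕ, ∃ n ≥ N, (φ n '' K) ∩ L = ∅ ∧ OmegaConvex Ω (φ n '' K)) :
    ∃ f : ℂ → ℂ, DifferentiableOn ℂ f Ω ∧ UniversalFor G φ f := by
  have : LocallyCompactSpace Ω := hΩ.locallyCompactSpace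
  have : LocallyCompactSpace G := hG.locallyCompactSpace
  have : CompleteSpace (holoC Ω) := (holoC_closed hΩ).completeSpace_coe
  have : IsCountablyGenerated (uniformity (holoC Ω)) := by
    rw [uniformity_subtype]; infer_instance
  have hcm : ∀ n, Continuous fun z : G => (⟨φ n z, hφm n z.2⟩ : Ω) := fun n =>
    Continuous.subtype_mk (continuousOn_iff_continuous_domRestrict.1 (hφd n).continuousOn) _
  let ph : ℕ → C(G, Ω) := fun n => ⟨_, hcm n⟩
  have hmem : ∀ n (F : C(Ω, ℂ)), F ∈ holoC Ω → F.comp (ph n) ∈ holoC G := by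
    intro n F hF
    refine (DifferentiableOn.comp (g := extC F) (f := φ n) hF (hφd n) (hφm n)).congr fun z hz => ?_
    rw [extC_of _ hz, Function.comp, extC_of F (hφm n hz)]; rfl
  let cp : ℕ → holoC Ω → holoC G := fun n F => ⟨F.1.comp (ph n), hmem n F.1 F.2⟩
  have hcp : ∀ n, Continuous (cp n) := fun n =>
    Continuous.subtype_mk ((ContinuousMap.continuous_precomp (ph n)).comp continuous_subtype_val) _
  let B := TopologicalSpace.countableBasis (holoC G)
  have hB : B.Countable := TopologicalSpace.countable_countableBasis _
  let O : Set (holoC G) → Set (holoC Ω) := fun V => ⋃ n, cp n ⁻¹' V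
  have hdense : Dense (⋂ V ∈ B, O V) := by
    refine dense_biInter_of_isOpen (fun V hV => isOpen_iUnion fun n =>
      (TopologicalSpace.isOpen_of_mem_countableBasis hV).preimage (hcp n)) hB (fun V hV => ?_)
    obtain ⟨g, hgV⟩ := TopologicalSpace.nonempty_of_mem_countableBasis hV
    have hVn : V ∈ nhds g := (TopologicalSpace.isOpen_of_mem_countableBasis hV).mem_nhds hgV
    rw [nhds_subtype, mem_comap] at hVn
    obtain ⟨V', hV', hVV⟩ := hVn
    obtain ⟨K, δ, hK, hδ, hKV⟩ := (nhd_basisC _).1 hV'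
    intro f
    rw [mem_closure_iff_nhds]
    intro W hW
    rw [nhds_subtype, mem_comap] at hW
    obtain ⟨W', hW', hWW⟩ := hW
    obtain ⟨L, ε, hL, hε, hLW⟩ := (nhd_basisC _).1 hW'
    obtain ⟨n, F, hFd, h1, h2⟩ := approx_step hG hGconn hΩ hΩconn hGtop hφd hφm hinj hcond
      (hK.image continuous_subtype_val) (Subtype.coe_image_subset _ _)
      (hL.image continuous_subtype_val) (Subtype.coe_image_subset _ _) f.2 g.2 hε hδ
    refine ⟨⟨resC F hFd.continuousOn, resC_mem F hFd⟩, hWW (hLW _ fun z hz => ?_),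
      mem_iUnion.2 ⟨n, hVV (hKV _ fun z hz => ?_)⟩⟩
    · have := h1 z (mem_image_of_mem _ hz)
      rwa [extC_of _ z.2] at this
    · have := h2 z (mem_image_of_mem _ hz)
      rwa [extC_of _ z.2] at this
  have : Nonempty (holoC Ω) := ⟨⟨resC (fun _ => 0) continuousOn_const,
    resC_mem _ (differentiableOn_const _)⟩⟩
  obtain ⟨F, hF⟩ := hdense.nonempty
  refine ⟨extC F.1, F.2, fun g hg K hKG hK ε hε => ?_⟩
  let g' : holoC G := ⟨resC g hg.continuousOn, resC_mem g hg⟩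
  have hn : {H : holoC G | ∀ z : G, z.1 ∈ K → ‖H.1 z - g z‖ < ε} ∈ nhds g' := by
    rw [nhds_subtype, mem_comap]
    refine ⟨{H | ∀ z : G, z.1 ∈ K → ‖H z - g z‖ < ε}, (nhd_basisC _).2
      ⟨Subtype.val ⁻¹' K, ε, ?_, hε, fun H hH z hz => hH z hz⟩, fun H hH => hH⟩
    rw [Subtype.isCompact_iff, Subtype.image_preimage_coe, inter_eq_right.2 hKG]
    exact hK
  obtain ⟨V, hV, hgV, hVs⟩ := (TopologicalSpace.isBasis_countableBasis _).mem_nhds_iff.1 hn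
  have := mem_iInter₂.1 hF V hV
  obtain ⟨n, hn⟩ := mem_iUnion.1 this
  refine ⟨n, fun z hz => ?_⟩
  have := hVs hn ⟨z, hKG hz⟩ hz
  rw [extC_of _ (hφm n (hKG hz))]
  exact this

end

/-- Theorem `thm-charac-injective` (2). -/
theorem universal_iff_image_omegaConvex
    (G Ω : Set ℂ) (hG : IsOpen G) (hGconn : IsConnected G)
    (hΩ : IsOpen Ω) (hΩconn : IsConnected Ω)
    (hGtop : HasNoHole G ∨ ∃ C₁ C₂ : Set ℂ, IsHole G C₁ ∧ IsHole G C₂ ∧ C₁ ≠ C₂)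
    (φ : ℕ → ℂ → ℂ) (hφd : ∀ n, DifferentiableOn ℂ (φ n) G)
    (hφm : ∀ n, Set.MapsTo (φ n) G Ω)
    (hinj : EventuallyInjective G φ) :
    (∃ f : ℂ → ℂ, DifferentiableOn ℂ f Ω ∧ UniversalFor G φ f) ↔
      ∀ K : Set ℂ, K ⊆ G → IsCompact K → OmegaConvex G K →
        ∀ L : Set ℂ, L ⊆ Ω → IsCompact L →
          ∀ N : ℕ, ∃ n ≥ N, (φ n '' K) ∩ L = ∅ ∧ OmegaConvex Ω (φ n '' K) := by
  constructor
  · rintro ⟨f, hf, hu⟩ K hKG hK hcv L hL hLc N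
    exact forward hG hΩ hφd hφm hinj hf hu hKG hK hcv hL hLc N
  · intro hcond
    exact backward hG hGconn hΩ hΩconn hGtop hφd hφm hinj hcond
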